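/- arXiv:1901.06951 — 2 statements merged into one kernel-verified Lean document; each statement's English description precedes it below -/
import Mathlib

section
/- Assume V ∈ C¹(ℝ^N), c ∈ ℝ, condition (V^c) and the coercivity condition (1.7). If q ∈ ℳ_c, then ½|q̇(t)|² − V(q(t)) = −c for all t ∈ (α_q, ω_q). -/
open MeasureTheory Filter Metric Set Topology
open scoped ENNReal

noncomputable section

abbrev Euc (N : ℕ) := EuclideanSpace ℝ (Fin N)

def setDist {E : Type*} [PseudoMetricSpace E] (A B : Set E) : ℝ :=
  sInf ((fun p : E × E => dist p.1 p.2) '' (A ×ˢ B))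

def IsH1loc {N : ℕ} (q q' : ℝ → Euc N) : Prop :=
  LocallyIntegrable q' volume ∧
  (∀ a b : ℝ, IntegrableOn (fun t => ‖q' t‖ ^ 2) (Icc a b) volume) ∧
  (∀ a b : ℝ, q b - q a = ∫ t in a..b, q' t)

def lagJ {N : ℕ} (V : Euc N → ℝ) (c : ℝ) (q q' : ℝ → Euc N) (I : Set ℝ) : ℝ≥0∞ :=
  ∫⁻ t in I, ENNReal.ofReal (2⁻¹ * ‖q' t‖ ^ 2 + (V (q t) - c))

def Gamma {N : ℕ} (V : Euc N → ℝ) (c : ℝ) (Vm Vp : Set (Euc N)) :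
    Set ((ℝ → Euc N) × (ℝ → Euc N)) :=
  {p | IsH1loc p.1 p.2 ∧ (∀ t, c ≤ V (p.1 t)) ∧
    (∀ ε > 0, ∃ᶠ t in atBot, infDist (p.1 t) Vm < ε) ∧
    (∀ ε > 0, ∃ᶠ t in atTop, infDist (p.1 t) Vp < ε)}

def mc {N : ℕ} (V : Euc N → ℝ) (c : ℝ) (Vm Vp : Set (Euc N)) : ℝ≥0∞ :=
  ⨅ (p) (_ : p ∈ Gamma V c Vm Vp), lagJ V c p.1 p.2 univ

def Coercive {N : ℕ} (V : Euc N → ℝ) (c : ℝ) (Vm Vp : Set (Euc N)) (R : ℝ) : Prop :=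
  mc V c Vm Vp =
    ⨅ (p) (_ : p ∈ Gamma V c Vm Vp) (_ : ∀ t, ‖p.1 t‖ ≤ R), lagJ V c p.1 p.2 univ

/-- `ρ₀ := (1/4)·dist(𝒱⁻ ∩ B̄_R(0), 𝒱⁺ ∩ B̄_R(0))`. -/
def rho0 {N : ℕ} (Vm Vp : Set (Euc N)) (R : ℝ) : ℝ :=
  (1 / 4) * setDist (Vm ∩ closedBall 0 R) (Vp ∩ closedBall 0 R)

/-- membership in `ℳ_c`. -/
def MemM {N : ℕ} (V : Euc N → ℝ) (c : ℝ) (Vm Vp : Set (Euc N)) (R : ℝ)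
    (q q' : ℝ → Euc N) : Prop :=
  (q, q') ∈ Gamma V c Vm Vp ∧
  infDist (q 0) {x | V x ≤ c} = rho0 Vm Vp R ∧
  lagJ V c q q' univ = mc V c Vm Vp ∧
  (∀ t, ‖q t‖ ≤ R)

/-- `α_q` (valued in `[-∞,+∞]`, with `−∞` when `q(ℝ) ∩ 𝒱⁻ = ∅`). -/
def alphaQ {N : ℕ} (Vm : Set (Euc N)) (q : ℝ → Euc N) : EReal :=
  sSup {x : EReal | ∃ t : ℝ, x = (t : EReal) ∧ q t ∈ Vm}

/-- `ω_q` (valued in `[-∞,+∞]`, with `+∞` when there is no `t > α_q` with `q(t) ∈ 𝒱⁺`). -/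
def omegaQ {N : ℕ} (Vm Vp : Set (Euc N)) (q : ℝ → Euc N) : EReal :=
  sInf {x : EReal | ∃ t : ℝ, x = (t : EReal) ∧ alphaQ Vm q < (t : EReal) ∧ q t ∈ Vp}

/-- reflection of `q` with respect to `b` (used for `t > b`). -/
def reflPlus {N : ℕ} (q : ℝ → Euc N) (b : ℝ) : ℝ → Euc N :=
  fun t => if t ≤ b then q t else q (2 * b - t)

/-- reflection of `q` with respect to `a` (used for `t < a`). -/
def reflMinus {N : ℕ} (q : ℝ → Euc N) (a : ℝ) : ℝ → Euc N :=
  fun t => if a ≤ t then q t else q (2 * a - t)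

/-- ω-limit set `Ω_q := ⋂_{t > α_q} closure {q(s) : s ≥ t}`. -/
def omegaLimitSet {N : ℕ} (Vm : Set (Euc N)) (q : ℝ → Euc N) : Set (Euc N) :=
  ⋂ (t : ℝ) (_ : alphaQ Vm q < (t : EReal)), closure (q '' Ici t)

/-- α-limit set `𝒜_q := ⋂_{t < ω_q} closure {q(s) : s ≤ t}`. -/
def alphaLimitSet {N : ℕ} (Vm Vp : Set (Euc N)) (q : ℝ → Euc N) : Set (Euc N) :=
  ⋂ (t : ℝ) (_ : (t : EReal) < omegaQ Vm Vp q), closure (q '' Iic t)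

theorem locInt_of_Icc {N : ℕ} {f : ℝ → Euc N} (h : ∀ a b : ℝ, IntegrableOn f (Icc a b) volume) :
    LocallyIntegrable f volume := by
  rw [MeasureTheory.locallyIntegrable_iff]
  intro K hK
  exact (h _ _).mono_set hK.isBounded.subset_Icc_sInf_sSup

namespace IsH1loc
variable {N : ℕ} {q q' f f' g g' : ℝ → Euc N}

theorem onIcc (h : IsH1loc q q') (a b : ℝ) : IntegrableOn q' (Icc a b) volume :=
  h.1.integrableOn_isCompact isCompact_Icc

theorem ii (h : IsH1loc q q') (a b : ℝ) : IntervalIntegrable q' volume a b :=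
  intervalIntegrable_iff.2 ((h.onIcc (min a b) (max a b)).mono_set Ioc_subset_Icc_self)

theorem eq_add (h : IsH1loc q q') (a b : ℝ) : q b = q a + ∫ t in a..b, q' t := by
  rw [← h.2.2 a b]; abel

theorem cont (h : IsH1loc q q') : Continuous q := by
  have : q = fun b => q 0 + ∫ t in (0:ℝ)..b, q' t := by
    funext b; exact h.eq_add 0 b
  rw [this]
  exact continuous_const.add (intervalIntegral.continuous_primitive (fun a b => h.ii a b) 0)

theorem sq_ii (h : IsH1loc q q') (a b : ℝ) :
    IntervalIntegrable (fun t => ‖q' t‖ ^ 2) volume a b := by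
  rw [intervalIntegrable_iff]
  exact (h.2.1 (min a b) (max a b)).mono_set Ioc_subset_Icc_self

theorem memLp (h : IsH1loc q q') (a b : ℝ) : MemLp q' 2 (volume.restrict (Icc a b)) := by
  rw [memLp_two_iff_integrable_sq_norm (h.onIcc a b).aestronglyMeasurable]
  exact h.2.1 a b

theorem mk' (h1 : ∀ a b : ℝ, MemLp q' 2 (volume.restrict (Icc a b)))
    (τ : ℝ) (h2 : ∀ b, q b - q τ = ∫ t in τ..b, q' t) : IsH1loc q q' := by
  have h0 : ∀ a b : ℝ, IntegrableOn q' (Icc a b) volume := fun a b =>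
    (h1 a b).integrable (by norm_num)
  refine ⟨locInt_of_Icc h0, fun a b => ?_, fun a b => ?_⟩
  · exact (memLp_two_iff_integrable_sq_norm (h0 a b).aestronglyMeasurable).1 (h1 a b)
  · have hi : ∀ a b : ℝ, IntervalIntegrable q' volume a b := fun a b =>
      intervalIntegrable_iff.2 ((h0 (min a b) (max a b)).mono_set Ioc_subset_Icc_self)
    rw [← intervalIntegral.integral_interval_sub_left (hi τ b) (hi τ a), ← h2, ← h2]
    abel

theorem const (x : Euc N) : IsH1loc (fun _ => x) (fun _ => 0) := by
  refine mk' (fun a b => MemLp.zero') 0 (by simp)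

theorem line (x v : Euc N) : IsH1loc (fun t => x + t • v) (fun _ => v) := by
  refine mk' (fun a b => memLp_const v) 0 (by simp)

theorem add_smul (hf : IsH1loc f f') (hg : IsH1loc g g') (s : ℝ) :
    IsH1loc (fun t => f t + s • g t) (fun t => f' t + s • g' t) := by
  refine mk' (fun a b => (hf.memLp a b).add ((hg.memLp a b).const_smul s)) 0 (fun b => ?_)
  have hs : IntervalIntegrable (fun t => s • g' t) volume 0 b := (hg.ii _ _).smul s
  rw [intervalIntegral.integral_add (hf.ii _ _) hs,
    intervalIntegral.integral_smul, ← hf.2.2, ← hg.2.2, smul_sub]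
  abel

theorem affine (h : IsH1loc q q') {k : ℝ} (hk : k ≠ 0) (d : ℝ) :
    IsH1loc (fun t => q (k * t + d)) (fun t => k • q' (k * t + d)) := by
  have h1 : ∀ a b : ℝ, IntervalIntegrable (fun t => q' (k * t + d)) volume a b := by
    intro a b
    have := ((h.ii (k * a + d) (k * b + d)).comp_add_right d).comp_mul_left (c := k)
    simpa [hk] using this
  have h2 : ∀ a b : ℝ, IntervalIntegrable (fun t => ‖q' (k * t + d)‖ ^ 2) volume a b := by
    intro a b
    have := ((h.sq_ii (k * a + d) (k * b + d)).comp_add_right d).comp_mul_left (c := k)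
    simpa [hk] using this
  have on1 : ∀ a b : ℝ, IntegrableOn (fun t => q' (k * t + d)) (Icc a b) volume := by
    intro a b
    rcases le_total a b with hab | hab
    · exact (intervalIntegrable_iff_integrableOn_Icc_of_le hab).1 (h1 a b)
    · refine ((intervalIntegrable_iff_integrableOn_Icc_of_le hab).1 (h1 b a)).mono_set ?_
      intro x hx; exact ⟨hab.trans hx.1, hx.2.trans hab⟩
  have on2 : ∀ a b : ℝ, IntegrableOn (fun t => ‖q' (k * t + d)‖ ^ 2) (Icc a b) volume := by
    intro a b
    rcases le_total a b with hab | hab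
    · exact (intervalIntegrable_iff_integrableOn_Icc_of_le hab).1 (h2 a b)
    · refine ((intervalIntegrable_iff_integrableOn_Icc_of_le hab).1 (h2 b a)).mono_set ?_
      intro x hx; exact ⟨hab.trans hx.1, hx.2.trans hab⟩
  refine mk' (fun a b => MemLp.const_smul ?_ k) 0 (fun b => ?_)
  · rw [memLp_two_iff_integrable_sq_norm (on1 a b).aestronglyMeasurable]
    exact on2 a b
  · rw [intervalIntegral.integral_smul, intervalIntegral.integral_comp_mul_add _ hk,
      smul_inv_smul₀ hk]
    exact h.2.2 _ _

end IsH1loc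

/-- concatenation of two curves at time `τ`. -/
def cat {X : Type*} (τ : ℝ) (f g : ℝ → X) : ℝ → X := fun t => if t ≤ τ then f t else g t

theorem cat_le {X : Type*} {τ t : ℝ} {f g : ℝ → X} (h : t ≤ τ) : cat τ f g t = f t := by
  simp [cat, h]

theorem cat_gt {X : Type*} {τ t : ℝ} {f g : ℝ → X} (h : τ < t) : cat τ f g t = g t := by
  simp [cat, h]

theorem cat_ge {X : Type*} {τ t : ℝ} {f g : ℝ → X} (hτ : f τ = g τ) (h : τ ≤ t) :
    cat τ f g t = g t := by
  rcases h.eq_or_lt with rfl | h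
  · rw [cat_le le_rfl, hτ]
  · exact cat_gt h

theorem IsH1loc.cat {N : ℕ} {f f' g g' : ℝ → Euc N} {τ : ℝ} (hf : IsH1loc f f')
    (hg : IsH1loc g g') (hτ : f τ = g τ) : IsH1loc (cat τ f g) (cat τ f' g') := by
  classical
  refine IsH1loc.mk' (fun a b => ?_) τ (fun b => ?_)
  · have : _root_.cat τ f' g' = (Iic τ).piecewise f' g' := by
      funext t; simp [_root_.cat, Set.piecewise]
    rw [this]
    exact MemLp.piecewise measurableSet_Iic ((hf.memLp a b).restrict _) ((hg.memLp a b).restrict _)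
  · rw [cat_le le_rfl]
    rcases le_or_gt b τ with h | h
    · rw [cat_le h, hf.2.2 τ b]
      apply intervalIntegral.integral_congr_ae
      refine Eventually.of_forall fun t ht => ?_
      rw [uIoc_of_ge h] at ht
      rw [cat_le ht.2]
    · rw [cat_gt h, hτ, hg.2.2 τ b]
      apply intervalIntegral.integral_congr_ae
      refine Eventually.of_forall fun t ht => ?_
      rw [uIoc_of_le h.le] at ht
      rw [cat_gt ht.1]

section lag
variable {N : ℕ} {V : Euc N → ℝ} {c : ℝ} {q q' f f' g g' : ℝ → Euc N}

theorem lagJ_congr {S : Set ℝ} (hS : MeasurableSet S) (h : ∀ t ∈ S, f t = g t)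
    (h' : ∀ t ∈ S, f' t = g' t) : lagJ V c f f' S = lagJ V c g g' S := by
  unfold lagJ
  refine setLIntegral_congr_fun hS (fun t ht => ?_)
  simp only [h t ht, h' t ht]

theorem lagJ_split (a : ℝ) :
    lagJ V c f f' univ = lagJ V c f f' (Iic a) + lagJ V c f f' (Ioi a) := by
  unfold lagJ
  rw [← lintegral_union measurableSet_Ioi (Iic_disjoint_Ioi le_rfl), Iic_union_Ioi]

theorem lagJ_split_Ioi {a b : ℝ} (h : a ≤ b) :
    lagJ V c f f' (Ioi a) = lagJ V c f f' (Ioc a b) + lagJ V c f f' (Ioi b) := by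
  unfold lagJ
  rw [← lintegral_union measurableSet_Ioi, Ioc_union_Ioi_eq_Ioi h]
  exact Set.disjoint_left.2 fun x hx hx' => not_lt.2 hx.2 hx'

theorem lag_ii (hV : Continuous V) (hf : IsH1loc f f') (a b : ℝ) :
    IntervalIntegrable (fun t => 2⁻¹ * ‖f' t‖ ^ 2 + (V (f t) - c)) volume a b :=
  ((hf.sq_ii a b).const_mul _).add
    (((hV.comp hf.cont).sub continuous_const).intervalIntegrable a b)

theorem lagJ_Ioc (hV : Continuous V) (hf : IsH1loc f f') {a b : ℝ} (hab : a ≤ b)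
    (hc : ∀ t ∈ Icc a b, c ≤ V (f t)) :
    lagJ V c f f' (Ioc a b)
      = ENNReal.ofReal (∫ t in a..b, (2⁻¹ * ‖f' t‖ ^ 2 + (V (f t) - c))) := by
  rw [intervalIntegral.integral_of_le hab, ofReal_integral_eq_lintegral_ofReal]
  · rfl
  · exact (intervalIntegrable_iff_integrableOn_Ioc_of_le hab).1 (lag_ii hV hf a b)
  · filter_upwards [ae_restrict_mem measurableSet_Ioc] with t ht
    have := hc t (Ioc_subset_Icc_self ht)
    simp only [Pi.zero_apply]
    have : 0 ≤ ‖f' t‖ ^ 2 := by positivity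
    linarith

theorem lagJ_shift (d a : ℝ) :
    lagJ V c (fun t => q (1 * t + d)) (fun t => (1:ℝ) • q' (1 * t + d)) (Ioi a)
      = lagJ V c q q' (Ioi (a + d)) := by
  have hm := measurePreserving_add_right (volume : Measure ℝ) d
  have := hm.setLIntegral_comp_preimage_emb (measurableEmbedding_addRight d)
    (fun t => ENNReal.ofReal (2⁻¹ * ‖q' t‖ ^ 2 + (V (q t) - c))) (Ioi (a + d))
  unfold lagJ
  rw [← this]
  simp

theorem lagJ_refl (d : ℝ) :
    lagJ V c (fun t => q (-1 * t + d)) (fun t => (-1:ℝ) • q' (-1 * t + d)) (Iic d)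
      = lagJ V c q q' (Ioi 0) := by
  have hm := Measure.measurePreserving_sub_left (volume : Measure ℝ) d
  have := hm.setLIntegral_comp_preimage_emb (MeasurableEquiv.subLeft d).measurableEmbedding
    (fun t => ENNReal.ofReal (2⁻¹ * ‖q' t‖ ^ 2 + (V (q t) - c))) (Ioi 0)
  unfold lagJ
  rw [← this]
  have e : (fun t => d - t) ⁻¹' Ioi (0:ℝ) = Iio d := by ext t; simp
  rw [e, ← restrict_Iio_eq_restrict_Iic]
  simp [neg_add_eq_sub]

end lag

section cmp
variable {N : ℕ} {V : Euc N → ℝ} {c : ℝ} {Vm Vp : Set (Euc N)} {q q' r r' : ℝ → Euc N}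

theorem compare (hV : Continuous V) (hq : (q, q') ∈ Gamma V c Vm Vp)
    (hmin : lagJ V c q q' univ = mc V c Vm Vp) (hfin : mc V c Vm Vp ≠ ⊤) {a b b' : ℝ}
    (hab : a ≤ b) (hab' : a ≤ b') (hr : IsH1loc r r') (ra : r a = q a) (rb : r b' = q b)
    (hrc : ∀ t ∈ Icc a b', c ≤ V (r t)) :
    ∫ t in a..b, (2⁻¹ * ‖q' t‖ ^ 2 + (V (q t) - c))
      ≤ ∫ t in a..b', (2⁻¹ * ‖r' t‖ ^ 2 + (V (r t) - c)) := by
  obtain ⟨hH, hc, hbot, htop⟩ := hq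
  simp only at hH hc hbot htop
  set s : ℝ → Euc N := fun t => q (1 * t + (b - b')) with hs
  set s' : ℝ → Euc N := fun t => (1:ℝ) • q' (1 * t + (b - b')) with hs'
  have hsH : IsH1loc s s' := hH.affine one_ne_zero _
  have e1 : r b' = s b' := by rw [rb, hs]; simp
  have e2 : q a = cat b' r s a := by rw [cat_le hab', ra]
  have hp : IsH1loc (cat a q (cat b' r s)) (cat a q' (cat b' r' s')) := hH.cat (hr.cat hsH e1) e2
  have hG : (cat a q (cat b' r s), cat a q' (cat b' r' s')) ∈ Gamma V c Vm Vp := by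
    refine ⟨hp, fun t => ?_, fun ε hε => ?_, fun ε hε => ?_⟩
    · simp only
      rcases le_or_gt t a with h | h
      · rw [cat_le h]; exact hc t
      · rw [cat_gt h]
        rcases le_or_gt t b' with h' | h'
        · rw [cat_le h']; exact hrc t ⟨h.le, h'⟩
        · rw [cat_gt h']; exact hc _
    · refine ((hbot ε hε).and_eventually (eventually_le_atBot a)).mono fun t ht => ?_
      simp only
      rw [cat_le ht.2]; exact ht.1
    · simp only
      have h1 : ∃ᶠ t in atTop, infDist (q t) Vp < ε ∧ b < t :=
        (htop ε hε).and_eventually (eventually_gt_atTop b)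
      have h2 : Tendsto (fun t : ℝ => t - (b - b')) atTop atTop :=
        tendsto_atTop_add_const_right _ (-(b - b')) tendsto_id |>.congr fun t => by simp; ring
      refine h2.frequently (h1.mono fun t ht => ?_)
      have h3 : b' < t - (b - b') := by linarith [ht.2]
      rw [cat_gt (hab'.trans_lt h3), cat_gt h3, hs]
      have : 1 * (t - (b - b')) + (b - b') = t := by ring
      simp only [this]; exact ht.1
  have hle : lagJ V c q q' univ ≤ lagJ V c (cat a q (cat b' r s)) (cat a q' (cat b' r' s')) univ := by
    rw [hmin]; exact iInf₂_le _ hG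
  have hne : lagJ V c q q' univ ≠ ⊤ := hmin ▸ hfin
  have hA : lagJ V c (cat a q (cat b' r s)) (cat a q' (cat b' r' s')) (Iic a)
      = lagJ V c q q' (Iic a) :=
    lagJ_congr measurableSet_Iic (fun t ht => cat_le ht) (fun t ht => cat_le ht)
  have hB : lagJ V c (cat a q (cat b' r s)) (cat a q' (cat b' r' s')) (Ioc a b')
      = lagJ V c r r' (Ioc a b') :=
    lagJ_congr measurableSet_Ioc (fun t ht => by rw [cat_gt ht.1, cat_le ht.2])
      (fun t ht => by rw [cat_gt ht.1, cat_le ht.2])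
  have hC : lagJ V c (cat a q (cat b' r s)) (cat a q' (cat b' r' s')) (Ioi b')
      = lagJ V c q q' (Ioi b) := by
    rw [lagJ_congr (g := s) (g' := s') measurableSet_Ioi
      (fun t ht => by rw [cat_gt (hab'.trans_lt ht), cat_gt ht])
      (fun t ht => by rw [cat_gt (hab'.trans_lt ht), cat_gt ht]), hs, hs', lagJ_shift]
    congr 2; ring
  rw [lagJ_split a, lagJ_split_Ioi hab] at hle hne
  rw [lagJ_split (f := cat a q (cat b' r s)) a, lagJ_split_Ioi hab', hA, hB, hC] at hle
  have n1 : lagJ V c q q' (Iic a) ≠ ⊤ := fun h => hne (by simp [h])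
  have n2 : lagJ V c q q' (Ioi b) ≠ ⊤ := fun h => hne (by simp [h])
  rw [ENNReal.add_le_add_iff_left n1, ENNReal.add_le_add_iff_right n2,
    lagJ_Ioc hV hH hab (fun t _ => hc t), lagJ_Ioc hV hr hab' hrc] at hle
  refine (ENNReal.ofReal_le_ofReal_iff ?_).1 hle
  refine intervalIntegral.integral_nonneg hab' fun t ht => ?_
  have := hrc t ht
  have : 0 ≤ ‖r' t‖ ^ 2 := by positivity
  linarith

theorem equipart (hV : Continuous V) (hq : (q, q') ∈ Gamma V c Vm Vp)
    (hmin : lagJ V c q q' univ = mc V c Vm Vp) (hfin : mc V c Vm Vp ≠ ⊤) {a b : ℝ}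
    (hab : a ≤ b) :
    ∫ t in a..b, 2⁻¹ * ‖q' t‖ ^ 2 = ∫ t in a..b, (V (q t) - c) := by
  have hH : IsH1loc q q' := hq.1
  have hc : ∀ t, c ≤ V (q t) := hq.2.1
  have hi1 : IntervalIntegrable (fun t => 2⁻¹ * ‖q' t‖ ^ 2) volume a b :=
    (hH.sq_ii a b).const_mul _
  have hi2 : IntervalIntegrable (fun t => V (q t) - c) volume a b :=
    ((hV.comp hH.cont).sub continuous_const).intervalIntegrable a b
  set K := ∫ t in a..b, 2⁻¹ * ‖q' t‖ ^ 2 with hK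
  set P := ∫ t in a..b, (V (q t) - c) with hP
  -- `k` is the speed-up factor
  have key : ∀ k : ℝ, 0 < k → K + P ≤ k * K + k⁻¹ * P := by
    intro k hk
    have hr := hH.affine hk.ne' (a - k * a)
    have h := compare hV hq hmin hfin (b' := a + k⁻¹ * (b - a)) hab
      (by have : 0 ≤ k⁻¹ * (b - a) := mul_nonneg (inv_nonneg.2 hk.le) (sub_nonneg.2 hab)
          linarith) hr (by simp) (by
            have : k * (a + k⁻¹ * (b - a)) + (a - k * a) = b := by field_simp; ring
            simp only [this]) (fun t _ => hc _)
    rw [intervalIntegral.integral_add hi1 hi2] at h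
    have e := intervalIntegral.integral_comp_mul_add
      (a := a) (b := a + k⁻¹ * (b - a))
      (fun t => 2⁻¹ * ‖k • q' t‖ ^ 2 + (V (q t) - c)) hk.ne' (a - k * a)
    rw [e] at h
    have e1 : k * a + (a - k * a) = a := by ring
    have e2 : k * (a + k⁻¹ * (b - a)) + (a - k * a) = b := by field_simp; ring
    rw [e1, e2] at h
    have e3 : ∀ t, 2⁻¹ * ‖k • q' t‖ ^ 2 + (V (q t) - c)
        = k ^ 2 * (2⁻¹ * ‖q' t‖ ^ 2) + (V (q t) - c) := by
      intro t; rw [norm_smul, mul_pow, Real.norm_eq_abs, sq_abs]; ring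
    simp only [e3] at h
    rw [intervalIntegral.integral_add (hi1.const_mul _) hi2,
      intervalIntegral.integral_const_mul (k ^ 2), ← hK, ← hP, smul_eq_mul] at h
    calc K + P ≤ _ := h
      _ = _ := by field_simp
  have key2 : ∀ k : ℝ, 0 < k → 0 ≤ (k - 1) * (k * K - P) := by
    intro k hk
    have h := mul_le_mul_of_nonneg_left (key k hk) hk.le
    have : k * (k * K + k⁻¹ * P) = k * k * K + P := by field_simp
    rw [this] at h
    nlinarith
  have hct : Tendsto (fun k : ℝ => k * K - P) (𝓝 1) (𝓝 (1 * K - P)) :=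
    (Continuous.tendsto (by fun_prop) 1)
  have hge : 0 ≤ 1 * K - P := by
    refine ge_of_tendsto (hct.mono_left (nhdsWithin_le_nhds (s := Ioi 1))) ?_
    filter_upwards [self_mem_nhdsWithin] with k hk
    have hk : 1 < k := hk
    exact nonneg_of_mul_nonneg_right (key2 k (by linarith)) (by linarith)
  have hle : 1 * K - P ≤ 0 := by
    refine le_of_tendsto (hct.mono_left (nhdsWithin_le_nhds (s := Iio 1))) ?_
    filter_upwards [self_mem_nhdsWithin,
      (nhdsWithin_le_nhds (Ioi_mem_nhds one_pos) : Ioi (0:ℝ) ∈ 𝓝[<] 1)] with k hk hk0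
    have hk : k < 1 := hk
    have := key2 k hk0
    by_contra hcon
    push Not at hcon
    nlinarith
  linarith

end cmp

section fin
variable {N : ℕ} {V : Euc N → ℝ} {c : ℝ} {q q' r r' : ℝ → Euc N}

/-- a finite action half-line curve which ends at a point of `A`. -/
theorem exists_half (hV : Continuous V) {A B : Set (Euc N)} (hsplit : {x | V x ≤ c} = A ∪ B)
    (D : ℝ) (hsep : ∀ x ∈ A, ∀ y ∈ B, D ≤ dist x y) (hA : A.Nonempty) {p : Euc N} (hp : c ≤ V p)
    (hD : infDist p A < D) :
    ∃ f f' : ℝ → Euc N, IsH1loc f f' ∧ f 0 = p ∧ (∀ t, 0 ≤ t → c ≤ V (f t)) ∧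
      (∀ t, 1 ≤ t → f t ∈ A) ∧ lagJ V c f f' (Ioi 0) ≠ ⊤ := by
  obtain ⟨x, hxA, hx⟩ := (infDist_lt_iff hA).1 hD
  set l : ℝ → Euc N := fun t => p + t • (x - p) with hl
  have hlc : Continuous l := by fun_prop
  set S : Set ℝ := {s | s ∈ Icc (0:ℝ) 1 ∧ V (l s) ≤ c} with hS
  have hx1 : V x ≤ c := by
    have : x ∈ {x | V x ≤ c} := by rw [hsplit]; exact Or.inl hxA
    exact this
  have hSne : S.Nonempty := ⟨1, ⟨by simp, by simpa [hl] using hx1⟩⟩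
  have hScl : IsCompact S := by
    refine isCompact_Icc.inter_right (isClosed_le (hV.comp hlc) continuous_const)
  obtain ⟨s, hsS, hsmin⟩ := hScl.exists_isLeast hSne
  have hbefore : ∀ t, 0 ≤ t → t < s → c < V (l t) := by
    intro t h0 hts
    by_contra hcon
    exact absurd (hsmin ⟨⟨h0, hts.le.trans hsS.1.2⟩, not_lt.1 hcon⟩) (not_le.2 hts)
  have hVs : V (l s) = c := by
    refine le_antisymm hsS.2 ?_
    rcases hsS.1.1.eq_or_lt with h0 | h0
    · rw [← h0]; simpa [hl] using hp
    · have ht : Tendsto (fun t => V (l t)) (𝓝[<] s) (𝓝 (V (l s))) :=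
        ((hV.comp hlc).tendsto s).mono_left nhdsWithin_le_nhds
      refine ge_of_tendsto ht ?_
      filter_upwards [self_mem_nhdsWithin,
        (nhdsWithin_le_nhds (Ioi_mem_nhds h0) : Ioi (0:ℝ) ∈ 𝓝[<] s)] with t ht1 ht0
      exact (hbefore t (le_of_lt ht0) ht1).le
  have hsA : l s ∈ A := by
    have : l s ∈ A ∪ B := by rw [← hsplit]; exact hsS.2
    rcases this with h | h
    · exact h
    · exfalso
      have h1 := hsep x hxA _ h
      have h2 : dist x (l s) = (1 - s) * dist p x := by
        have : x - l s = (1 - s) • (x - p) := by simp only [hl]; module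
        rw [dist_eq_norm, this, norm_smul, Real.norm_of_nonneg (by linarith [hsS.1.2]),
          dist_comm, dist_eq_norm]
      have h3 : (1 - s) * dist p x ≤ dist p x := by
        have := hsS.1.1
        nlinarith [dist_nonneg (x := p) (y := x)]
      linarith
  have hf : IsH1loc (cat s l (fun _ => l s)) (cat s (fun _ => x - p) (fun _ => 0)) :=
    (IsH1loc.line p (x - p)).cat (IsH1loc.const _) rfl
  have hc : ∀ t, 0 ≤ t → c ≤ V (cat s l (fun _ => l s) t) := by
    intro t h0
    rcases lt_or_ge t s with h | h
    · rw [cat_le h.le]; exact (hbefore t h0 h).le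
    · rw [cat_ge (f := l) (g := fun _ => l s) rfl h]; exact hVs.ge
  refine ⟨_, _, hf, ?_, hc, fun t ht => ?_, ?_⟩
  · rw [cat_le hsS.1.1]; simp [hl]
  · rw [cat_ge (f := l) (g := fun _ => l s) rfl (hsS.1.2.trans ht)]; exact hsA
  · rw [lagJ_split_Ioi hsS.1.1, lagJ_Ioc hV hf hsS.1.1 (fun t ht => hc t ht.1)]
    rw [lagJ_congr (f := cat s l (fun _ => l s)) (g := fun _ => l s)
      (f' := cat s (fun _ => x - p) (fun _ => 0)) (g' := fun _ => 0) measurableSet_Ioi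
      (fun t ht => cat_gt ht) (fun t ht => cat_gt ht)]
    simp [lagJ, hVs]

theorem mc_ne_top (hV : Continuous V) {Vm Vp : Set (Euc N)}
    (hsplit : {x | V x ≤ c} = Vm ∪ Vp) (hsep : 0 < setDist Vm Vp)
    (hq : (q, q') ∈ Gamma V c Vm Vp) : mc V c Vm Vp ≠ ⊤ := by
  obtain ⟨hH, hc, hbot, htop⟩ := hq
  simp only at hH hc hbot htop
  have hne : (Vm ×ˢ Vp).Nonempty := by
    by_contra h
    rw [Set.not_nonempty_iff_eq_empty] at h
    simp [setDist, h] at hsep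
  have hdist : ∀ x ∈ Vm, ∀ y ∈ Vp, setDist Vm Vp ≤ dist x y := by
    intro x hx y hy
    refine csInf_le ⟨0, ?_⟩ ⟨(x, y), ⟨hx, hy⟩, rfl⟩
    rintro _ ⟨z, -, rfl⟩
    exact dist_nonneg
  obtain ⟨t1, ht1⟩ := (hbot _ hsep).exists
  obtain ⟨t2, ht2, h12⟩ := ((htop _ hsep).and_eventually (eventually_ge_atTop t1)).exists
  obtain ⟨f, f', hf, f0, fc, fA, ffin⟩ :=
    exists_half hV hsplit _ hdist hne.fst (hc t1) ht1
  obtain ⟨g, g', hg, g0, gc, gA, gfin⟩ :=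
    exists_half hV (hsplit.trans (union_comm _ _)) (setDist Vm Vp)
      (fun x hx y hy => by rw [dist_comm]; exact hdist y hy x hx) hne.snd (hc t2) ht2
  set F : ℝ → Euc N := fun t => f (-1 * t + t1) with hF
  set F' : ℝ → Euc N := fun t => (-1 : ℝ) • f' (-1 * t + t1) with hF'
  set G : ℝ → Euc N := fun t => g (1 * t + (-t2)) with hGd
  set G' : ℝ → Euc N := fun t => (1 : ℝ) • g' (1 * t + (-t2)) with hGd'
  have HF : IsH1loc F F' := hf.affine (by norm_num) _
  have HG : IsH1loc G G' := hg.affine (by norm_num) _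
  have e1 : q t2 = G t2 := by simp [hGd, g0]
  have e2 : F t1 = cat t2 q G t1 := by rw [cat_le h12]; simp [hF, f0]
  have hp : IsH1loc (cat t1 F (cat t2 q G)) (cat t1 F' (cat t2 q' G')) := HF.cat (hH.cat HG e1) e2
  have hmem : (cat t1 F (cat t2 q G), cat t1 F' (cat t2 q' G')) ∈ Gamma V c Vm Vp := by
    refine ⟨hp, fun t => ?_, fun ε hε => ?_, fun ε hε => ?_⟩
    · simp only
      rcases le_or_gt t t1 with h | h
      · rw [cat_le h]; exact fc _ (by linarith)
      · rw [cat_gt h]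
        rcases le_or_gt t t2 with h' | h'
        · rw [cat_le h']; exact hc t
        · rw [cat_gt h']; exact gc _ (by linarith)
    · refine Eventually.frequently ?_
      filter_upwards [eventually_le_atBot (t1 - 1)] with t ht
      rw [cat_le (by linarith), infDist_zero_of_mem (fA _ (by linarith))]
      exact hε
    · refine Eventually.frequently ?_
      filter_upwards [eventually_ge_atTop (t2 + 1)] with t ht
      rw [cat_gt (by linarith), cat_gt (by linarith), infDist_zero_of_mem (gA _ (by linarith))]
      exact hε
  refine ne_top_of_le_ne_top ?_ (iInf₂_le _ hmem)
  simp only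
  rw [lagJ_split t1, lagJ_split_Ioi h12]
  rw [lagJ_congr (S := Iic t1) (g := F) (g' := F') measurableSet_Iic (fun t ht => cat_le ht)
      (fun t ht => cat_le ht),
    lagJ_congr (S := Ioc t1 t2) (g := q) (g' := q') measurableSet_Ioc
      (fun t ht => by rw [cat_gt ht.1, cat_le ht.2])
      (fun t ht => by rw [cat_gt ht.1, cat_le ht.2]),
    lagJ_congr (S := Ioi t2) (g := G) (g' := G') measurableSet_Ioi
      (fun t ht => by rw [cat_gt (h12.trans_lt ht), cat_gt ht])
      (fun t ht => by rw [cat_gt (h12.trans_lt ht), cat_gt ht]),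
    hF, hF', hGd, hGd', lagJ_refl, lagJ_shift, lagJ_Ioc hV hH h12 (fun t _ => hc t)]
  simp [ffin, gfin]

end fin

section el
variable {N : ℕ} {V : Euc N → ℝ} {c : ℝ} {Vm Vp : Set (Euc N)} {q q' φ g : ℝ → Euc N}

theorem swap_tri {w : ℝ → Euc N} {a b : ℝ} (hab : a ≤ b) (hw : IntegrableOn w (Ioc a b))
    (hg : IntegrableOn g (Ioc a b)) :
    ∫ t in a..b, inner ℝ (w t) (∫ s in a..t, g s)
      = ∫ s in a..b, inner ℝ (∫ t in s..b, w t) (g s) := by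
  set F : ℝ → ℝ → ℝ := fun t s => (Iic t).indicator (fun s => inner ℝ (w t) (g s)) s with hF
  have hFi : Integrable (Function.uncurry F)
      ((volume.restrict (Ioc a b)).prod (volume.restrict (Ioc a b))) := by
    have h1 : Integrable (fun z : ℝ × ℝ => inner ℝ (w z.1) (g z.2))
        ((volume.restrict (Ioc a b)).prod (volume.restrict (Ioc a b))) :=
      Integrable.op_fst_snd (op := fun x y : Euc N => (inner ℝ x y : ℝ)) continuous_inner
        ⟨1, fun x y => by simpa using norm_inner_le_norm (𝕜 := ℝ) x y⟩ hw hg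
    have h2 := h1.indicator (measurableSet_le measurable_snd measurable_fst)
    refine h2.congr (Eventually.of_forall fun z => ?_)
    simp [Function.uncurry, hF, Set.indicator]
  have key := integral_integral_swap hFi
  rw [intervalIntegral.integral_of_le hab, intervalIntegral.integral_of_le hab]
  calc _ = ∫ t in Ioc a b, ∫ s in Ioc a b, F t s := by
        refine setIntegral_congr_fun measurableSet_Ioc fun t ht => ?_
        simp only [hF]
        rw [setIntegral_indicator measurableSet_Iic, intervalIntegral.integral_of_le ht.1.le]
        have : Ioc a b ∩ Iic t = Ioc a t := by
          ext s; simp only [mem_inter_iff, mem_Ioc, mem_Iic]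
          exact ⟨fun h => ⟨h.1.1, h.2⟩, fun h => ⟨⟨h.1, h.2.trans ht.2⟩, h.2⟩⟩
        rw [this, integral_inner]
        exact hg.mono_set (Ioc_subset_Ioc_right ht.2)
    _ = _ := key
    _ = _ := by
        refine setIntegral_congr_fun measurableSet_Ioc fun s hs => ?_
        have e : ∀ t, F t s = (Ici s).indicator (fun t => inner ℝ (w t) (g s)) t := by
          intro t; simp [hF, Set.indicator]
        simp only [e]
        rw [setIntegral_indicator measurableSet_Ici, intervalIntegral.integral_of_le hs.2]
        have : Ioc a b ∩ Ici s = Icc s b := by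
          ext t; simp only [mem_inter_iff, mem_Ioc, mem_Ici, mem_Icc]
          exact ⟨fun h => ⟨h.2, h.1.2⟩, fun h => ⟨⟨hs.1.trans_le h.1, h.2⟩, h.1⟩⟩
        rw [this, integral_Icc_eq_integral_Ioc]
        simp only [real_inner_comm]
        rw [integral_inner]
        exact hw.mono_set (Ioc_subset_Ioc_left hs.1.le)

theorem inner_ii {f' g' : ℝ → Euc N} {f g : ℝ → Euc N} (hf : IsH1loc f f') (hg : IsH1loc g g')
    (a b : ℝ) : IntervalIntegrable (fun t => (inner ℝ (f' t) (g' t) : ℝ)) volume a b := by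
  rw [intervalIntegrable_iff]
  have : Integrable (fun t => (inner ℝ (f' t) (g' t) : ℝ))
    (volume.restrict (Icc (min a b) (max a b))) := by
    refine Integrable.mono' (Integrable.add (hf.2.1 (min a b) (max a b)) (hg.2.1 (min a b) (max a b)))
      ((hf.onIcc _ _).aestronglyMeasurable.inner (hg.onIcc _ _).aestronglyMeasurable)
      (Eventually.of_forall fun t => ?_)
    have h1 := norm_inner_le_norm (𝕜 := ℝ) (f' t) (g' t)
    simp only [Pi.add_apply]
    nlinarith [sq_nonneg (‖f' t‖ - ‖g' t‖), sq_nonneg (‖f' t‖ + ‖g' t‖)]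
  exact IntegrableOn.mono_set this Ioc_subset_Icc_self

theorem first_var (hV : ContDiff ℝ 1 V) (hq : (q, q') ∈ Gamma V c Vm Vp)
    (hmin : lagJ V c q q' univ = mc V c Vm Vp) (hfin : mc V c Vm Vp ≠ ⊤) {a b : ℝ}
    (hab : a ≤ b) (hpos : ∀ t ∈ Icc a b, c < V (q t)) (hφ : IsH1loc φ g) (ha : φ a = 0)
    (hb : φ b = 0) :
    (∫ t in a..b, (inner ℝ (q' t) (g t) : ℝ)) + ∫ t in a..b, fderiv ℝ V (q t) (φ t) = 0 := by
  have hH : IsH1loc q q' := hq.1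
  have hVc := hV.continuous
  have hqc := hH.cont
  have hφc := hφ.cont
  have hdV : Continuous (fderiv ℝ V) := hV.continuous_fderiv (by norm_num)
  have hi1 : IntervalIntegrable (fun t => 2⁻¹ * ‖q' t‖ ^ 2) volume a b :=
    (hH.sq_ii a b).const_mul _
  have hi2 := inner_ii hH hφ a b
  have hi3 : IntervalIntegrable (fun t => 2⁻¹ * ‖g t‖ ^ 2) volume a b :=
    (hφ.sq_ii a b).const_mul _
  set M := ∫ t in a..b, (inner ℝ (q' t) (g t) : ℝ) with hM
  set K := ∫ t in a..b, 2⁻¹ * ‖q' t‖ ^ 2 with hK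
  set Q := ∫ t in a..b, 2⁻¹ * ‖g t‖ ^ 2 with hQ
  set Ψ : ℝ → ℝ := fun s => K + s * M + s ^ 2 * Q + ∫ t in a..b, (V (q t + s • φ t) - c) with hΨ
  have hΨe : ∀ s : ℝ, ∫ t in a..b, (2⁻¹ * ‖q' t + s • g t‖ ^ 2 + (V (q t + s • φ t) - c)) = Ψ s := by
    intro s
    have e : ∀ t, 2⁻¹ * ‖q' t + s • g t‖ ^ 2 + (V (q t + s • φ t) - c)
        = 2⁻¹ * ‖q' t‖ ^ 2 + s * inner ℝ (q' t) (g t) + s ^ 2 * (2⁻¹ * ‖g t‖ ^ 2)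
          + (V (q t + s • φ t) - c) := by
      intro t
      rw [norm_add_sq_real, inner_smul_right, norm_smul, mul_pow, Real.norm_eq_abs, sq_abs]; ring
    simp only [e]
    have hi4 : IntervalIntegrable (fun t => V (q t + s • φ t) - c) volume a b :=
      Continuous.intervalIntegrable (by fun_prop) a b
    rw [intervalIntegral.integral_add ((hi1.add (hi2.const_mul s)).add (hi3.const_mul (s ^ 2))) hi4,
      intervalIntegral.integral_add (hi1.add (hi2.const_mul s)) (hi3.const_mul (s ^ 2)),
      intervalIntegral.integral_add hi1 (hi2.const_mul s),
      intervalIntegral.integral_const_mul s, intervalIntegral.integral_const_mul (s ^ 2)]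
  have hadm : ∀ᶠ s : ℝ in 𝓝 0, ∀ t ∈ Icc a b, c < V (q t + s • φ t) := by
    refine isCompact_Icc.eventually_forall_of_forall_eventually fun t ht => ?_
    have hcont : Continuous fun z : ℝ × ℝ => V (q z.2 + z.1 • φ z.2) := by fun_prop
    refine hcont.continuousAt.eventually (lt_mem_nhds ?_)
    simpa using hpos t ht
  have hlm : IsLocalMin Ψ 0 := by
    filter_upwards [hadm] with s hs
    have h := compare hVc hq hmin hfin hab hab (hH.add_smul hφ s) (by simp [ha]) (by simp [hb])
      (fun t ht => (hs t ht).le)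
    rw [hΨe] at h
    rw [← hΨe 0]
    simpa using h
  have hd : HasDerivAt (fun s : ℝ => ∫ t in a..b, (V (q t + s • φ t) - c))
      (∫ t in a..b, fderiv ℝ V (q t + (0:ℝ) • φ t) (φ t)) 0 := by
    have hc2 : Continuous fun z : ℝ × ℝ => fderiv ℝ V (q z.2 + z.1 • φ z.2) (φ z.2) :=
      (hdV.comp (by fun_prop)).clm_apply (by fun_prop)
    obtain ⟨C, hC⟩ := ((isCompact_Icc (a := (-1:ℝ)) (b := 1)).prod
      (isCompact_Icc (a := a) (b := b))).exists_bound_of_continuousOn hc2.continuousOn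
    refine (intervalIntegral.hasDerivAt_integral_of_dominated_loc_of_deriv_le
      (F := fun s t => V (q t + s • φ t) - c)
      (F' := fun s t => fderiv ℝ V (q t + s • φ t) (φ t)) (bound := fun _ => C)
      (s := Icc (-1) 1) (Icc_mem_nhds (by norm_num) (by norm_num)) ?_ ?_ ?_ ?_ ?_ ?_).2
    · exact Eventually.of_forall fun s => Continuous.aestronglyMeasurable (by fun_prop)
    · exact Continuous.intervalIntegrable (by fun_prop) a b
    · exact Continuous.aestronglyMeasurable ((hdV.comp (by fun_prop)).clm_apply (by fun_prop))
    · refine Eventually.of_forall fun t ht s hs => ?_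
      rw [uIoc_of_le hab] at ht
      exact hC (s, t) ⟨hs, Ioc_subset_Icc_self ht⟩
    · exact intervalIntegrable_const
    · refine Eventually.of_forall fun t _ s _ => ?_
      have h1 : HasFDerivAt V (fderiv ℝ V (q t + s • φ t)) (q t + s • φ t) :=
        (hV.differentiable (by norm_num) _).hasFDerivAt
      have h2 : HasDerivAt (fun s : ℝ => q t + s • φ t) (φ t) s := by
        simpa using ((hasDerivAt_id s).smul_const (φ t)).const_add (q t)
      exact (h1.comp_hasDerivAt s h2).sub_const c
  have hΨd : HasDerivAt Ψ (M + ∫ t in a..b, fderiv ℝ V (q t + (0:ℝ) • φ t) (φ t)) 0 := by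
    have h1 : HasDerivAt (fun s : ℝ => K + s * M + s ^ 2 * Q) M 0 := by
      have := (((hasDerivAt_id (0:ℝ)).mul_const M).const_add K).add
        (((hasDerivAt_id (0:ℝ)).pow 2).mul_const Q)
      exact (by simpa using this : HasDerivAt ((fun s => K + s * M) + fun s => s ^ 2 * Q) M 0)
    exact h1.add hd
  have := hlm.hasDerivAt_eq_zero hΨd
  simpa using this

theorem exists_cont_deriv (hV : ContDiff ℝ 1 V) (hq : (q, q') ∈ Gamma V c Vm Vp)
    (hmin : lagJ V c q q' univ = mc V c Vm Vp) (hfin : mc V c Vm Vp ≠ ⊤) {a b : ℝ}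
    (hab : a < b) (hpos : ∀ t ∈ Icc a b, c < V (q t)) :
    ∃ u : ℝ → Euc N, Continuous u ∧ ∀ᵐ t ∂(volume.restrict (Ioc a b)), q' t = u t := by
  have hH : IsH1loc q q' := hq.1
  have hqc := hH.cont
  have hdV : Continuous (fderiv ℝ V) := hV.continuous_fderiv (by norm_num)
  set w : ℝ → Euc N := fun t => (InnerProductSpace.toDual ℝ (Euc N)).symm (fderiv ℝ V (q t)) with hw
  have hwc : Continuous w :=
    (InnerProductSpace.toDual ℝ (Euc N)).symm.continuous.comp (hdV.comp hqc)
  set H : ℝ → Euc N := fun s => ∫ t in s..b, w t with hHd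
  have hHc : Continuous H := by
    have : H = fun s => - ∫ t in b..s, w t := by
      funext s; rw [hHd]; exact intervalIntegral.integral_symm _ _
    rw [this]
    exact (intervalIntegral.continuous_primitive (fun x y => hwc.intervalIntegrable x y) b).neg
  set m : Euc N := (b - a)⁻¹ • ∫ t in a..b, (q' t + H t) with hm
  set g : ℝ → Euc N := fun t => q' t + (H t - m) with hg
  set φ : ℝ → Euc N := fun t => ∫ s in a..t, g s with hφd
  have hφ : IsH1loc φ g := by
    refine IsH1loc.mk' (fun x y => (hH.memLp x y).add ?_) a (fun y => by simp [hφd])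
    have hc : Continuous fun t => H t - m := hHc.sub continuous_const
    rw [memLp_two_iff_integrable_sq_norm hc.aestronglyMeasurable]
    exact (hc.norm.pow 2).integrableOn_Icc
  have hφa : φ a = 0 := by simp [hφd]
  have hHi : IntervalIntegrable H volume a b := hHc.intervalIntegrable a b
  have hφb : φ b = 0 := by
    have e : ∀ t, g t = (q' t + H t) - m := fun t => by simp only [hg]; abel
    simp only [hφd, e]
    rw [intervalIntegral.integral_sub ((hH.ii a b).add hHi) intervalIntegrable_const,
      intervalIntegral.integral_const, hm, smul_inv_smul₀ (sub_pos.2 hab).ne', sub_self]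
  have hfv := first_var hV hq hmin hfin hab.le hpos hφ hφa hφb
  have e1 : ∀ t, fderiv ℝ V (q t) (φ t) = inner ℝ (w t) (∫ s in a..t, g s) := fun t => by
    rw [hw]; simp only [InnerProductSpace.toDual_symm_apply]; rfl
  simp only [e1] at hfv
  rw [swap_tri hab.le (hwc.integrableOn_Icc.mono_set Ioc_subset_Icc_self)
    ((hφ.onIcc a b).mono_set Ioc_subset_Icc_self)] at hfv
  have hcH : ∀ k : ℝ → Euc N, Continuous k →
      IntervalIntegrable (fun t => (inner ℝ (k t) (g t) : ℝ)) volume a b := by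
    intro k hk
    refine inner_ii (f := fun t => ∫ s in a..t, k s) (f' := k) ?_ hφ a b
    refine IsH1loc.mk' (fun x y => ?_) a (fun y => by simp)
    rw [memLp_two_iff_integrable_sq_norm hk.aestronglyMeasurable]
    exact (hk.norm.pow 2).integrableOn_Icc
  have hz : ∫ t in a..b, ‖g t‖ ^ 2 = 0 := by
    have e2 : ∀ t, ‖g t‖ ^ 2 = inner ℝ (q' t) (g t) + inner ℝ (H t) (g t) - inner ℝ m (g t) := by
      intro t
      rw [← inner_add_left, ← inner_sub_left, ← real_inner_self_eq_norm_sq]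
      congr 1; simp only [hg]; abel
    simp only [e2]
    rw [intervalIntegral.integral_sub ((inner_ii hH hφ a b).add (hcH H hHc))
      (hcH (fun _ => m) continuous_const),
      intervalIntegral.integral_add (inner_ii hH hφ a b) (hcH H hHc), hfv]
    have : ∫ t in a..b, (inner ℝ m (g t) : ℝ) = inner ℝ m (φ b) := by
      rw [hφd]
      simp only
      rw [intervalIntegral.integral_of_le hab.le, intervalIntegral.integral_of_le hab.le,
        integral_inner]
      exact (hφ.onIcc a b).mono_set Ioc_subset_Icc_self
    rw [this, hφb]; simp
  refine ⟨fun t => m - H t, by fun_prop, ?_⟩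
  rw [intervalIntegral.integral_of_le hab.le, setIntegral_eq_zero_iff_of_nonneg_ae
    (Eventually.of_forall fun t => by positivity)
    ((hφ.2.1 a b).mono_set Ioc_subset_Icc_self)] at hz
  filter_upwards [hz] with t ht
  have h0 : g t = 0 := by simpa using ht
  have : q' t = g t + (m - H t) := by simp only [hg]; abel
  rw [this, h0, zero_add]

theorem energy_local (hV : ContDiff ℝ 1 V) (hq : (q, q') ∈ Gamma V c Vm Vp)
    (hmin : lagJ V c q q' univ = mc V c Vm Vp) (hfin : mc V c Vm Vp ≠ ⊤) {t₀ : ℝ}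
    (hpos : c < V (q t₀)) : 2⁻¹ * ‖deriv q t₀‖ ^ 2 - V (q t₀) = -c := by
  have hH : IsH1loc q q' := hq.1
  have hqc := hH.cont
  have hVc := hV.continuous
  have hev : ∀ᶠ t in 𝓝 t₀, c < V (q t) :=
    (hVc.comp hqc).continuousAt.eventually (lt_mem_nhds hpos)
  obtain ⟨δ, hδ, hball⟩ := Metric.nhds_basis_closedBall.eventually_iff.1 hev
  rw [Real.closedBall_eq_Icc] at hball
  set a := t₀ - δ with ha
  set b := t₀ + δ with hb
  have hab : a < b := by linarith
  have hnb : Icc a b ∈ 𝓝 t₀ := Icc_mem_nhds (by linarith) (by linarith)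
  obtain ⟨u, huc, hu⟩ := exists_cont_deriv hV hq hmin hfin hab (fun t ht => hball ht)
  rw [ae_restrict_iff' measurableSet_Ioc] at hu
  have hu' : ∀ t ∈ Icc a b, ∀ᵐ s, s ∈ uIoc a t → q' s = u s := by
    intro t ht
    filter_upwards [hu] with s hs hst
    rw [uIoc_of_le ht.1] at hst
    exact hs ⟨hst.1, hst.2.trans ht.2⟩
  have hqd : HasDerivAt q (u t₀) t₀ := by
    have h1 : HasDerivAt (fun t => q a + ∫ s in a..t, u s) (u t₀) t₀ :=
      (intervalIntegral.integral_hasDerivAt_right (huc.intervalIntegrable _ _)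
        (huc.stronglyMeasurableAtFilter _ _) huc.continuousAt).const_add _
    refine h1.congr_of_eventuallyEq ?_
    filter_upwards [hnb] with t ht
    rw [hH.eq_add a t, intervalIntegral.integral_congr_ae (hu' t ht)]
  set e : ℝ → ℝ := fun t => 2⁻¹ * ‖u t‖ ^ 2 - (V (q t) - c) with he
  have hec : Continuous e := by fun_prop
  have hz : ∀ t ∈ Icc a b, ∫ s in a..t, e s = 0 := by
    intro t ht
    have h1 : IntervalIntegrable (fun s => 2⁻¹ * ‖u s‖ ^ 2) volume a t :=
      Continuous.intervalIntegrable (by fun_prop) _ _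
    have h2 : IntervalIntegrable (fun s => V (q s) - c) volume a t :=
      Continuous.intervalIntegrable (by fun_prop) _ _
    rw [he, intervalIntegral.integral_sub h1 h2, ← equipart hVc hq hmin hfin ht.1, sub_eq_zero]
    refine intervalIntegral.integral_congr_ae ?_
    filter_upwards [hu' t ht] with s hs hst
    rw [hs hst]
  have hed : HasDerivAt (fun t => ∫ s in a..t, e s) (e t₀) t₀ :=
    intervalIntegral.integral_hasDerivAt_right (hec.intervalIntegrable _ _)
        (hec.stronglyMeasurableAtFilter _ _) hec.continuousAt
  have hed0 : HasDerivAt (fun t => ∫ s in a..t, e s) 0 t₀ := by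
    refine (hasDerivAt_const t₀ (0:ℝ)).congr_of_eventuallyEq ?_
    filter_upwards [hnb] with t ht
    exact hz t ht
  have h0 := hed.unique hed0
  rw [hqd.deriv]
  simp only [he] at h0
  linarith

end el

/-- Lemma 2.9 (energy identity): a minimizer has constant mechanical energy `−c`
on its connecting time interval. -/
theorem minimizer_energy {N : ℕ} (hN : 0 < N) (V : Euc N → ℝ) (hV : ContDiff ℝ 1 V)
    (c : ℝ) (Vm Vp : Set (Euc N)) (hVm : IsClosed Vm) (hVp : IsClosed Vp)
    (hsplit : {x | V x ≤ c} = Vm ∪ Vp) (hsep : 0 < setDist Vm Vp)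
    (R : ℝ) (hR : 0 < R) (hcoer : Coercive V c Vm Vp R)
    (q q' : ℝ → Euc N) (hq : MemM V c Vm Vp R q q') :
    ∀ t : ℝ, alphaQ Vm q < (t : EReal) → (t : EReal) < omegaQ Vm Vp q →
      2⁻¹ * ‖deriv q t‖ ^ 2 - V (q t) = -c := by
  intro t hα hω
  obtain ⟨hG, -, hmin, -⟩ := hq
  have hfin := mc_ne_top hV.continuous hsplit hsep hG
  refine energy_local hV hG hmin hfin ?_
  by_contra hcon
  have hmem : q t ∈ Vm ∪ Vp := by rw [← hsplit]; exact not_lt.1 hcon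
  rcases hmem with h | h
  · exact absurd (le_sSup ⟨t, rfl, h⟩ : (t : EReal) ≤ alphaQ Vm q) (not_le.2 hα)
  · exact absurd (sInf_le ⟨t, rfl, hα, h⟩ : omegaQ Vm Vp q ≤ (t : EReal)) (not_le.2 hω)
end
end

section
/- Assume V ∈ C¹(ℝ^N), c ∈ ℝ, condition (V^c) and the coercivity condition (1.7), and let q ∈ ℳ_c. (i) If ω_q = +∞, then q̇(t) → 0 as t → +∞ and the ω-limit set Ω_q := ⋂_{t>α_q} closure{q(s) : s ≥ t} is a closed connected subset of 𝒱^c₊ ∩ {ξ ∈ ℝ^N : V(ξ) = c and ∇V(ξ) = 0}. (ii) If α_q = −∞, then q̇(t) → 0 as t → −∞ and the α-limit set 𝒜_q := ⋂_{t<ω_q} closure{q(s) : s ≤ t} is a closed connected subset of 𝒱^c₋ ∩ {ξ ∈ ℝ^N : V(ξ) = c and ∇V(ξ) = 0}. -/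
open MeasureTheory Filter Metric Set Topology
open scoped ENNReal

noncomputable section

lemma H1_of_intervals {N : ℕ} {q q' : ℝ → Euc N}
    (h1 : ∀ a b : ℝ, IntegrableOn q' (Icc a b) volume)
    (h2 : ∀ a b : ℝ, IntegrableOn (fun t => ‖q' t‖ ^ 2) (Icc a b) volume)
    (t0 : ℝ) (h3 : ∀ b : ℝ, q b - q t0 = ∫ t in t0..b, q' t) : IsH1loc q q' := by
  have hii : ∀ a b : ℝ, IntervalIntegrable q' volume a b := fun a b => by
    rw [intervalIntegrable_iff]
    exact (h1 (min a b) (max a b)).mono_set (by rw [uIoc]; exact Ioc_subset_Icc_self)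
  refine ⟨?_, h2, ?_⟩
  · rw [locallyIntegrable_iff]
    intro k hk
    obtain ⟨a, b, hab⟩ : ∃ a b, k ⊆ Icc a b := by
      obtain ⟨a, ha⟩ := hk.bddBelow
      obtain ⟨b, hb⟩ := hk.bddAbove
      exact ⟨a, b, fun x hx => ⟨ha hx, hb hx⟩⟩
    exact (h1 a b).mono_set hab
  · intro a b
    have := intervalIntegral.integral_interval_sub_left (hii t0 b) (hii t0 a)
    rw [← this, ← h3, ← h3]; abel

lemma H1_int {N : ℕ} {q q' : ℝ → Euc N} (h : IsH1loc q q') (a b : ℝ) :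
    IntegrableOn q' (Icc a b) volume :=
  h.1.integrableOn_isCompact isCompact_Icc

lemma H1_ii {N : ℕ} {q q' : ℝ → Euc N} (h : IsH1loc q q') (a b : ℝ) :
    IntervalIntegrable q' volume a b := by
  rw [intervalIntegrable_iff]
  exact (H1_int h (min a b) (max a b)).mono_set (by rw [uIoc]; exact Ioc_subset_Icc_self)

lemma H1_cont {N : ℕ} {q q' : ℝ → Euc N} (h : IsH1loc q q') : Continuous q := by
  have : q = fun t => q 0 + ∫ s in (0:ℝ)..t, q' s := by
    funext t
    rw [← h.2.2 0 t]; abel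
  rw [this]
  exact continuous_const.add (intervalIntegral.continuous_primitive (H1_ii h) 0)

lemma H1_meas {N : ℕ} {q q' : ℝ → Euc N} (h : IsH1loc q q') :
    AEStronglyMeasurable q' volume := h.1.aestronglyMeasurable

def spl {E : Type*} (t0 : ℝ) (f g : ℝ → E) : ℝ → E := fun t => if t ≤ t0 then f t else g t

lemma spl_int {E : Type*} [NormedAddCommGroup E] {t0 : ℝ} {f g : ℝ → E} {s : Set ℝ}
    (hf : IntegrableOn f s volume) (hg : IntegrableOn g s volume) :
    IntegrableOn (spl t0 f g) s volume := by
  have := Integrable.piecewise (s := Iic t0) measurableSet_Iic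
    (Integrable.integrableOn (s := Iic t0) hf) (Integrable.integrableOn (s := (Iic t0)ᶜ) hg)
  refine (integrable_congr (Eventually.of_forall fun t => ?_)).1 this
  simp [spl, Set.piecewise]

lemma H1_spl {N : ℕ} {q q' p p' : ℝ → Euc N} (hq : IsH1loc q q') (hp : IsH1loc p p')
    (t0 : ℝ) (h0 : q t0 = p t0) : IsH1loc (spl t0 q p) (spl t0 q' p') := by
  refine H1_of_intervals (fun a b => spl_int (H1_int hq a b) (H1_int hp a b)) (fun a b => ?_) t0 ?_
  · have : (fun t => ‖spl t0 q' p' t‖ ^ 2) =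
        spl t0 (fun t => ‖q' t‖ ^ 2) (fun t => ‖p' t‖ ^ 2) := by
      funext t; simp only [spl]; split_ifs <;> rfl
    rw [this]
    exact spl_int (hq.2.1 a b) (hp.2.1 a b)
  · intro b
    rcases le_total b t0 with hb | hb
    · have e : ∫ t in t0..b, spl t0 q' p' t = ∫ t in t0..b, q' t := by
        apply intervalIntegral.integral_congr
        intro t ht
        rw [uIcc_of_ge hb] at ht
        simp [spl, ht.2]
      rw [e, ← hq.2.2]; simp [spl, hb]
    · have e : ∫ t in t0..b, spl t0 q' p' t = ∫ t in t0..b, p' t := by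
        apply intervalIntegral.integral_congr_ae
        refine Eventually.of_forall fun t ht => ?_
        rw [uIoc_of_le hb] at ht
        simp [spl, ht.1]
      rw [e, ← hp.2.2]
      rcases hb.eq_or_lt with rfl | hb
      · simp
      · simp [spl, h0, hb]

lemma H1_aff {N : ℕ} (x u : Euc N) (s : ℝ) : IsH1loc (fun t => x + (t - s) • u) (fun _ => u) := by
  refine H1_of_intervals (fun a b => ?_) (fun a b => ?_) s ?_
  · exact continuous_const.integrableOn_Icc
  · exact continuous_const.integrableOn_Icc
  · intro b; simp

lemma H1_add {N : ℕ} {q q' p p' : ℝ → Euc N} (hq : IsH1loc q q') (hp : IsH1loc p p') :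
    IsH1loc (fun t => q t + p t) (fun t => q' t + p' t) := by
  refine H1_of_intervals (fun a b => (H1_int hq a b).add (H1_int hp a b)) (fun a b => ?_) 0 ?_
  · refine Integrable.mono' (((hq.2.1 a b).const_mul 2).add ((hp.2.1 a b).const_mul 2))
      (((H1_meas hq).add (H1_meas hp)).norm.pow 2).restrict (Eventually.of_forall fun t => ?_)
    have := norm_add_le (q' t) (p' t)
    simp only [Pi.add_apply, norm_pow, norm_norm]
    have h0 := norm_nonneg (q' t + p' t)
    nlinarith [sq_nonneg (‖q' t‖ - ‖p' t‖), norm_nonneg (q' t), norm_nonneg (p' t)]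
  · intro b
    rw [intervalIntegral.integral_add (H1_ii hq _ _) (H1_ii hp _ _), ← hq.2.2, ← hp.2.2]
    abel

lemma H1_smul {N : ℕ} {q q' : ℝ → Euc N} (hq : IsH1loc q q') (r : ℝ) :
    IsH1loc (fun t => r • q t) (fun t => r • q' t) := by
  refine H1_of_intervals (fun a b => (H1_int hq a b).smul r) (fun a b => ?_) 0 ?_
  · simp only [norm_smul, mul_pow]
    exact (hq.2.1 a b).const_mul _
  · intro b
    rw [intervalIntegral.integral_smul, ← hq.2.2, smul_sub]

lemma int_neg {E : Type*} [NormedAddCommGroup E] {f : ℝ → E} (a b : ℝ)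
    (h : IntegrableOn f (Icc (-b) (-a)) volume) :
    IntegrableOn (fun t => f (-t)) (Icc a b) volume := by
  have := ((Measure.measurePreserving_neg (volume : Measure ℝ)).integrableOn_comp_preimage
    (Homeomorph.neg ℝ).measurableEmbedding (f := f) (s := Icc (-b) (-a))).2 h
  simpa [Function.comp_def] using this

lemma H1_rev {N : ℕ} {q q' : ℝ → Euc N} (hq : IsH1loc q q') :
    IsH1loc (fun t => q (-t)) (fun t => - q' (-t)) := by
  refine H1_of_intervals (fun a b => (int_neg a b (H1_int hq _ _)).neg) (fun a b => ?_) 0 ?_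
  · simp only [norm_neg]
    exact int_neg (f := fun t => ‖q' t‖ ^ 2) a b (hq.2.1 _ _)
  · intro b
    rw [intervalIntegral.integral_neg, intervalIntegral.integral_comp_neg, ← hq.2.2]
    simp

lemma lagJ_rev {N : ℕ} (V : Euc N → ℝ) (c : ℝ) (q q' : ℝ → Euc N) (s : Set ℝ) :
    lagJ V c (fun t => q (-t)) (fun t => - q' (-t)) (Neg.neg ⁻¹' s) = lagJ V c q q' s := by
  have := (Measure.measurePreserving_neg (volume : Measure ℝ)).setLIntegral_comp_preimage_emb
    (Homeomorph.neg ℝ).measurableEmbedding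
    (fun t => ENNReal.ofReal (2⁻¹ * ‖q' t‖ ^ 2 + (V (q t) - c))) s
  simp only [lagJ, norm_neg]
  exact this

lemma Gamma_rev {N : ℕ} {V : Euc N → ℝ} {c : ℝ} {Vm Vp : Set (Euc N)} {q q' : ℝ → Euc N}
    (h : (q, q') ∈ Gamma V c Vm Vp) :
    ((fun t => q (-t)), (fun t => - q' (-t))) ∈ Gamma V c Vp Vm := by
  obtain ⟨h1, h2, h3, h4⟩ := h
  refine ⟨H1_rev h1, fun t => h2 (-t), fun ε hε => ?_, fun ε hε => ?_⟩
  · refine tendsto_neg_atTop_atBot.frequently ?_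
    simpa using h4 ε hε
  · refine tendsto_neg_atBot_atTop.frequently ?_
    simpa using h3 ε hε

lemma lag_intOn {N : ℕ} {V : Euc N → ℝ} (hV : Continuous V) (c : ℝ) {q q' : ℝ → Euc N}
    (h : IsH1loc q q') (a b : ℝ) :
    IntegrableOn (fun t => 2⁻¹ * ‖q' t‖ ^ 2 + (V (q t) - c)) (Icc a b) volume :=
  ((h.2.1 a b).const_mul _).add
    ((hV.comp (H1_cont h)).sub continuous_const).integrableOn_Icc

lemma lag_meas {N : ℕ} {V : Euc N → ℝ} (hV : Continuous V) (c : ℝ) {q q' : ℝ → Euc N}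
    (h : IsH1loc q q') :
    AEStronglyMeasurable (fun t => 2⁻¹ * ‖q' t‖ ^ 2 + (V (q t) - c)) volume :=
  (((H1_meas h).norm.pow 2).const_mul _).add
    ((hV.comp (H1_cont h)).sub continuous_const).aestronglyMeasurable

lemma lag_fin {N : ℕ} {V : Euc N → ℝ} (hV : Continuous V) (c : ℝ) {q q' : ℝ → Euc N}
    (h : IsH1loc q q') (a b : ℝ) : lagJ V c q q' (Icc a b) < ⊤ := by
  have := (lag_intOn hV c h a b).lintegral_lt_top
  exact this

lemma seg_exit {N : ℕ} {V : Euc N → ℝ} (hV : Continuous V) {c : ℝ} (x v : Euc N)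
    (hx : c ≤ V x) (hv : V v ≤ c) :
    ∃ τ ∈ Icc (0:ℝ) 1, V (x + τ • (v - x)) = c ∧ ∀ σ ∈ Icc 0 τ, c ≤ V (x + σ • (v - x)) := by
  set g : ℝ → ℝ := fun τ => V (x + τ • (v - x)) with hg
  have gc : Continuous g := by fun_prop
  have g0 : c ≤ g 0 := by simpa [hg] using hx
  have g1 : g 1 ≤ c := by simpa [hg] using hv
  have key : ∀ τ : ℝ, 0 ≤ τ → g τ ≤ c → ∃ σ ∈ Icc 0 τ, g σ = c := by
    intro τ h0 h1
    obtain ⟨σ, hσ, e⟩ := intermediate_value_Icc' h0 gc.continuousOn ⟨h1, g0⟩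
    exact ⟨σ, hσ, e⟩
  have hA : IsCompact (Icc (0:ℝ) 1 ∩ {τ | g τ = c}) :=
    isCompact_Icc.inter_right (isClosed_eq gc continuous_const)
  obtain ⟨σ, hσ, e⟩ := key 1 zero_le_one g1
  obtain ⟨τ, hτ, hmin⟩ := hA.exists_isLeast ⟨σ, hσ, e⟩
  refine ⟨τ, hτ.1, hτ.2, fun s hs => ?_⟩
  by_contra! hlt
  obtain ⟨s', hs', e'⟩ := key s hs.1 hlt.le
  have h1 : τ ≤ s' := hmin ⟨⟨hs'.1, by linarith [hs'.2, hs.2, hτ.1.2]⟩, e'⟩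
  have h2 : s = τ := le_antisymm hs.2 (h1.trans hs'.2)
  rw [h2] at hlt
  exact absurd hτ.2 hlt.ne

lemma Gamma_cut {N : ℕ} {V : Euc N → ℝ} (hV : Continuous V) {c : ℝ} {Vm Vp : Set (Euc N)}
    (hsplit : {x | V x ≤ c} = Vm ∪ Vp) {d : ℝ} (hd : 0 < d)
    (hsep : ∀ x ∈ Vm, ∀ y ∈ Vp, d ≤ dist x y) (hne : Vp.Nonempty) {q q' : ℝ → Euc N}
    (h : (q, q') ∈ Gamma V c Vm Vp) :
    ∃ p p', (p, p') ∈ Gamma V c Vm Vp ∧ lagJ V c p p' (Ioi 0) < ⊤ ∧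
      lagJ V c p p' (Iic 0) = lagJ V c q q' (Iic 0) := by
  obtain ⟨h1, h2, h3, h4⟩ := h
  simp only at h1 h2 h3 h4
  obtain ⟨t0, ht0, hdist⟩ := (frequently_atTop.1 (h4 d hd)) 0
  obtain ⟨v, hv, hvd⟩ := (infDist_lt_iff hne).1 hdist
  have hVv : V v ≤ c := by
    have : v ∈ {x | V x ≤ c} := by rw [hsplit]; exact Or.inr hv
    exact this
  obtain ⟨τ, hτ, hτc, hτ2⟩ := seg_exit hV (q t0) v (h2 t0) hVv
  set u : Euc N := τ • (v - q t0) with hu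
  set w : Euc N := q t0 + u with hw
  have hwV : V w = c := hτc
  have hwp : w ∈ Vp := by
    have : w ∈ Vm ∪ Vp := by rw [← hsplit]; exact hwV.le
    rcases this with hm | hp
    · exfalso
      have e : w - v = (1 - τ) • (q t0 - v) := by
        rw [hw, hu, sub_smul, one_smul, smul_sub, smul_sub]; abel
      have h5 := hsep w hm v hv
      rw [dist_eq_norm, e, norm_smul, Real.norm_eq_abs, abs_of_nonneg (by linarith [hτ.2]),
        ← dist_eq_norm] at h5
      nlinarith [hτ.1, hτ.2, dist_nonneg (x := q t0) (y := v)]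
    · exact hp
  set r : ℝ → Euc N := spl (t0 + 1) (fun t => q t0 + (t - t0) • u) (fun t => w + (t - 0) • (0 : Euc N))
    with hr
  set r' : ℝ → Euc N := spl (t0 + 1) (fun _ => u) (fun _ => (0 : Euc N)) with hr'
  have hrH : IsH1loc r r' := H1_spl (H1_aff _ _ _) (H1_aff _ _ _) _ (by simp [hw])
  have hH : IsH1loc (spl t0 q r) (spl t0 q' r') := H1_spl h1 hrH _ (by simp [hr, spl])
  have htail : ∀ t, t0 + 1 < t → spl t0 q r t = w := by
    intro t ht
    have : ¬ t ≤ t0 := by linarith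
    have h' : ¬ t ≤ t0 + 1 := by linarith
    simp [spl, hr, this, h']
  have htail' : ∀ t, t0 + 1 < t → spl t0 q' r' t = 0 := by
    intro t ht
    have : ¬ t ≤ t0 := by linarith
    have h' : ¬ t ≤ t0 + 1 := by linarith
    simp [spl, hr', this, h']
  refine ⟨spl t0 q r, spl t0 q' r', ⟨hH, ?_, ?_, ?_⟩, ?_, ?_⟩
  · intro t
    by_cases ht : t ≤ t0
    · simpa [spl, ht] using h2 t
    by_cases ht1 : t ≤ t0 + 1
    · have := hτ2 ((t - t0) * τ) ⟨by nlinarith [hτ.1], by nlinarith [hτ.1]⟩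
      simpa [spl, hr, ht, ht1, hu, smul_smul] using this
    · simp only [htail t (by linarith)]; exact hwV.ge
  · intro ε hε
    refine ((h3 ε hε).and_eventually (eventually_le_atBot t0)).mono ?_
    rintro t ⟨ht, htt⟩
    simpa [spl, htt] using ht
  · intro ε hε
    refine Eventually.frequently ?_
    filter_upwards [eventually_gt_atTop (t0 + 1)] with t ht
    simp only [htail t ht, infDist_zero_of_mem hwp]
    exact hε
  · have hsub : Ioi (0:ℝ) ⊆ Icc 0 (t0 + 1) ∪ Ioi (t0 + 1) := by
      intro t ht
      rcases le_or_gt t (t0 + 1) with h | h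
      · exact Or.inl ⟨le_of_lt ht, h⟩
      · exact Or.inr h
    have hz : lagJ V c (spl t0 q r) (spl t0 q' r') (Ioi (t0 + 1)) = 0 := by
      unfold lagJ
      rw [setLIntegral_congr_fun (g := fun _ => 0) measurableSet_Ioi]
      · simp
      · intro t ht
        simp only [htail t ht, htail' t ht, hwV]
        simp
    calc lagJ V c (spl t0 q r) (spl t0 q' r') (Ioi 0)
        ≤ lagJ V c (spl t0 q r) (spl t0 q' r') (Icc 0 (t0 + 1) ∪ Ioi (t0 + 1)) :=
          lintegral_mono_set hsub
      _ ≤ lagJ V c (spl t0 q r) (spl t0 q' r') (Icc 0 (t0 + 1)) +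
          lagJ V c (spl t0 q r) (spl t0 q' r') (Ioi (t0 + 1)) := lintegral_union_le _ _ _
      _ < ⊤ := by rw [hz, add_zero]; exact lag_fin hV c hH _ _
  · unfold lagJ
    refine setLIntegral_congr_fun measurableSet_Iic fun t ht => ?_
    have : t ≤ t0 := le_trans ht ht0
    simp [spl, this]

lemma mc_lt_top {N : ℕ} {V : Euc N → ℝ} (hV : Continuous V) {c : ℝ} {Vm Vp : Set (Euc N)}
    (hsplit : {x | V x ≤ c} = Vm ∪ Vp) {d : ℝ} (hd : 0 < d)
    (hsep : ∀ x ∈ Vm, ∀ y ∈ Vp, d ≤ dist x y) (hne : Vp.Nonempty) (hne' : Vm.Nonempty)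
    {q q' : ℝ → Euc N} (h : (q, q') ∈ Gamma V c Vm Vp) : mc V c Vm Vp < ⊤ := by
  obtain ⟨p, p', hp, hp1, -⟩ := Gamma_cut hV hsplit hd hsep hne h
  obtain ⟨r, r', hr, hr1, hr2⟩ := Gamma_cut hV (by rw [hsplit, union_comm]) hd
    (fun x hx y hy => by rw [dist_comm]; exact hsep y hy x hx) hne' (Gamma_rev hp)
  refine lt_of_le_of_lt (iInf₂_le _ (Gamma_rev hr)) ?_
  simp only
  have := lagJ_rev V c r r' univ
  rw [preimage_univ] at this
  rw [this]
  have e2 : lagJ V c r r' (Iic 0) ≤ lagJ V c p p' (Ioi 0) := by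
    rw [hr2, ← lagJ_rev V c p p' (Ioi 0)]
    have : Neg.neg ⁻¹' (Ioi (0:ℝ)) = Iio 0 := by ext; simp
    rw [this]
    unfold lagJ
    rw [setLIntegral_congr Iio_ae_eq_Iic]
  calc lagJ V c r r' univ = lagJ V c r r' (Iic 0 ∪ Ioi 0) := by rw [Iic_union_Ioi]
    _ ≤ lagJ V c r r' (Iic 0) + lagJ V c r r' (Ioi 0) := lintegral_union_le _ _ _
    _ < ⊤ := ENNReal.add_lt_top.2 ⟨lt_of_le_of_lt e2 hp1, hr1⟩

lemma gap {N : ℕ} {V : Euc N → ℝ} (hV : Continuous V) {c : ℝ} {Vm Vp : Set (Euc N)}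
    (hsplit : {x | V x ≤ c} = Vm ∪ Vp) (R : ℝ) {δ : ℝ} (hδ : 0 < δ) :
    ∃ μ > 0, ∀ x, ‖x‖ ≤ R → δ ≤ infDist x Vm → δ ≤ infDist x Vp → μ ≤ V x - c := by
  have hK : IsCompact (closedBall (0 : Euc N) R ∩
      ({x | δ ≤ infDist x Vm} ∩ {x | δ ≤ infDist x Vp})) :=
    (isCompact_closedBall _ _).inter_right
      ((isClosed_le continuous_const (continuous_infDist_pt _)).inter
        (isClosed_le continuous_const (continuous_infDist_pt _)))
  rcases Set.eq_empty_or_nonempty (closedBall (0 : Euc N) R ∩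
      ({x | δ ≤ infDist x Vm} ∩ {x | δ ≤ infDist x Vp})) with he | hne
  · refine ⟨1, one_pos, fun x h1 h2 h3 => ?_⟩
    exfalso
    have : x ∈ (∅ : Set (Euc N)) := by rw [← he]; exact ⟨by simpa using h1, h2, h3⟩
    exact this
  · obtain ⟨x0, hx0, hmin⟩ := hK.exists_isMinOn hne hV.continuousOn
    refine ⟨V x0 - c, ?_, fun x h1 h2 h3 => ?_⟩
    · by_contra! hle
      have : x0 ∈ Vm ∪ Vp := by rw [← hsplit]; show V x0 ≤ c; linarith
      rcases this with hm | hp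
      · have := hx0.2.1
        simp only [mem_ofPred_eq, infDist_zero_of_mem hm] at this; linarith
      · have := hx0.2.2
        simp only [mem_ofPred_eq, infDist_zero_of_mem hp] at this; linarith
    · have : V x0 ≤ V x := isMinOn_iff.1 hmin x ⟨by simpa using h1, h2, h3⟩
      linarith

/-- finite action gives an integrable Lagrangian. -/
lemma lag_integrable {N : ℕ} {V : Euc N → ℝ} (hV : Continuous V) {c : ℝ} {q q' : ℝ → Euc N}
    (h : IsH1loc q q') (hc : ∀ t, c ≤ V (q t)) (hfin : lagJ V c q q' univ < ⊤) :
    Integrable (fun t => 2⁻¹ * ‖q' t‖ ^ 2 + (V (q t) - c)) volume := by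
  refine ⟨lag_meas hV c h, ?_⟩
  rw [hasFiniteIntegral_iff_ofReal]
  · simpa [lagJ] using hfin
  · refine Eventually.of_forall fun t => ?_
    have := hc t
    simp only [Pi.zero_apply]
    have := sq_nonneg ‖q' t‖
    linarith

lemma tail_small {f : ℝ → ℝ} (hf : Integrable f volume) {ε : ℝ} (hε : 0 < ε) :
    ∃ T, ∀ a b, T ≤ a → T ≤ b → ∫ t in a..b, f t ≤ ε := by
  have h1 := intervalIntegral_tendsto_integral_Ioi 0 hf.integrableOn (tendsto_id (α := ℝ))
  obtain ⟨T, hT⟩ := (Metric.tendsto_atTop.1 h1) (ε / 2) (by linarith)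
  refine ⟨T, fun a b ha hb => ?_⟩
  have e := intervalIntegral.integral_interval_sub_left (μ := volume) (f := f) (a := 0)
    (hf.intervalIntegrable (a := 0) (b := b)) (hf.intervalIntegrable (a := 0) (b := a))
  rw [← e]
  have h2 := hT a ha
  have h3 := hT b hb
  rw [Real.dist_eq, abs_lt] at h2 h3
  simp only [id] at h2 h3
  linarith [h2.1, h2.2, h3.1, h3.2]

lemma incr_le {N : ℕ} {V : Euc N → ℝ} (hV : Continuous V) {c : ℝ} {q q' : ℝ → Euc N}
    (h : IsH1loc q q') {a b C D : ℝ} (hab : a ≤ b)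
    (hb : ∀ t ∈ Ioo a b, ‖q' t‖ ≤ C * (2⁻¹ * ‖q' t‖ ^ 2 + (V (q t) - c)) + D) :
    ‖q b - q a‖ ≤ C * (∫ t in a..b, (2⁻¹ * ‖q' t‖ ^ 2 + (V (q t) - c))) + D * (b - a) := by
  have hL : IntervalIntegrable (fun t => 2⁻¹ * ‖q' t‖ ^ 2 + (V (q t) - c)) volume a b :=
    (intervalIntegrable_iff_integrableOn_Icc_of_le hab).2 (lag_intOn hV c h a b)
  rw [h.2.2 a b]
  calc ‖∫ t in a..b, q' t‖ ≤ ∫ t in a..b, ‖q' t‖ :=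
        intervalIntegral.norm_integral_le_integral_norm hab
    _ ≤ ∫ t in a..b, (C * (2⁻¹ * ‖q' t‖ ^ 2 + (V (q t) - c)) + D) := by
        refine intervalIntegral.integral_mono_on_of_le_Ioo hab (H1_ii h a b).norm
          ((hL.const_mul C).add intervalIntegrable_const) hb
    _ = _ := by
        rw [intervalIntegral.integral_add (hL.const_mul C) intervalIntegrable_const,
          intervalIntegral.integral_const_mul]
        simp [mul_comm]

lemma osc {N : ℕ} {V : Euc N → ℝ} (hV : Continuous V) {c : ℝ} {q q' : ℝ → Euc N}
    (h : IsH1loc q q') (hc : ∀ t, c ≤ V (q t)) (hfin : lagJ V c q q' univ < ⊤)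
    (k : ℝ) (hk : 0 < k) {ε : ℝ} (hε : 0 < ε) :
    ∃ T, ∀ s, T ≤ s → ∀ τ ∈ Icc 0 k, ‖q (s + τ) - q s‖ ≤ ε := by
  set lam : ℝ := k / ε with hlam
  have hl : 0 < lam := by positivity
  obtain ⟨T, hT⟩ := tail_small (lag_integrable hV h hc hfin) (ε := ε / (2 * lam)) (by positivity)
  refine ⟨T, fun s hs τ hτ => ?_⟩
  have := incr_le (c := c) hV h (a := s) (b := s + τ) (C := lam) (D := 1 / (2 * lam))
    (by linarith [hτ.1]) (fun t _ => by
      have h1 := hc t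
      have h2 : ‖q' t‖ ≤ lam * (2⁻¹ * ‖q' t‖ ^ 2) + 1 / (2 * lam) := by
        have : 0 ≤ (lam * ‖q' t‖ - 1) ^ 2 / (2 * lam) := by positivity
        have e : (lam * ‖q' t‖ - 1) ^ 2 / (2 * lam) =
          lam * (2⁻¹ * ‖q' t‖ ^ 2) + 1 / (2 * lam) - ‖q' t‖ := by field_simp; ring
        linarith
      have h3 : 0 ≤ lam * (V (q t) - c) := mul_nonneg hl.le (by linarith)
      linarith [mul_add lam (2⁻¹ * ‖q' t‖ ^ 2) (V (q t) - c)])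
  have h1 := hT s (s + τ) hs (by linarith [hτ.1])
  have h2 : lam * (∫ t in s..(s + τ), (2⁻¹ * ‖q' t‖ ^ 2 + (V (q t) - c))) ≤ ε / 2 := by
    calc _ ≤ lam * (ε / (2 * lam)) := mul_le_mul_of_nonneg_left h1 hl.le
      _ = ε / 2 := by field_simp
  have h3 : 1 / (2 * lam) * (s + τ - s) ≤ ε / 2 := by
    calc 1 / (2 * lam) * (s + τ - s) ≤ 1 / (2 * lam) * k := by
          apply mul_le_mul_of_nonneg_left _ (by positivity); linarith [hτ.2]
      _ = ε / 2 := by rw [hlam]; field_simp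
  linarith

lemma tendsto_Vp {N : ℕ} {V : Euc N → ℝ} (hV : Continuous V) {c : ℝ} {Vm Vp : Set (Euc N)}
    (hsplit : {x | V x ≤ c} = Vm ∪ Vp) {d : ℝ} (hd : 0 < d)
    (hsep : ∀ x ∈ Vm, ∀ y ∈ Vp, d ≤ dist x y) (hne : Vp.Nonempty) (hne' : Vm.Nonempty)
    {q q' : ℝ → Euc N} (hG : (q, q') ∈ Gamma V c Vm Vp) (hfin : lagJ V c q q' univ < ⊤)
    {R : ℝ} (hR : ∀ t, ‖q t‖ ≤ R) {δ : ℝ} (hδ : 0 < δ) :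
    ∀ᶠ t in atTop, infDist (q t) Vp < δ := by
  obtain ⟨h1, h2, h3, h4⟩ := hG
  simp only at h1 h2 h3 h4
  wlog hδd : δ ≤ d / 2 generalizing δ
  · exact (this (δ := min δ (d / 2)) (by positivity) (min_le_right _ _)).mono
      fun t ht => ht.trans_le (min_le_left _ _)
  obtain ⟨μ, hμ, hgap⟩ := gap hV hsplit R (δ := δ / 2) (by linarith)
  have hsum : ∀ x, d ≤ infDist x Vm + infDist x Vp := by
    intro x
    by_contra! hlt
    set η := (d - infDist x Vm - infDist x Vp) / 2 with hη
    obtain ⟨a, ha, ha'⟩ := (infDist_lt_iff hne').1 (show infDist x Vm < infDist x Vm + η by linarith)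
    obtain ⟨b, hb, hb'⟩ := (infDist_lt_iff hne).1 (show infDist x Vp < infDist x Vp + η by linarith)
    have := hsep a ha b hb
    have := dist_triangle a x b
    rw [dist_comm a x] at this
    linarith
  set C : ℝ := max 1 (1 / (2 * μ)) with hC
  have hC0 : 0 < C := lt_of_lt_of_le one_pos (le_max_left _ _)
  obtain ⟨T, hT⟩ := tail_small (lag_integrable hV h1 h2 hfin) (ε := δ / (4 * C)) (by positivity)
  have hfc : Continuous fun t => infDist (q t) Vp := (continuous_infDist_pt _).comp (H1_cont h1)
  obtain ⟨t1, ht1, hf1⟩ := (frequently_atTop.1 (h4 (δ / 2) (by linarith))) T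
  filter_upwards [eventually_ge_atTop t1] with t2 ht2
  by_contra! hge
  have hA : IsCompact (Icc t1 t2 ∩ {t | infDist (q t) Vp ≤ δ / 2}) :=
    isCompact_Icc.inter_right (isClosed_le hfc continuous_const)
  obtain ⟨a, ha, hamax⟩ := hA.exists_isGreatest ⟨t1, ⟨le_rfl, ht2⟩, hf1.le⟩
  have hB : IsCompact (Icc a t2 ∩ {t | δ ≤ infDist (q t) Vp}) :=
    isCompact_Icc.inter_right (isClosed_le continuous_const hfc)
  obtain ⟨b, hb, hbmin⟩ := hB.exists_isLeast ⟨t2, ⟨ha.1.2, le_rfl⟩, hge⟩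
  have hab : a ≤ b := hb.1.1
  have hmid : ∀ t ∈ Ioo a b, μ ≤ V (q t) - c := by
    intro t ht
    have u1 : infDist (q t) Vp < δ := by
      by_contra! hh
      have : b ≤ t := hbmin ⟨⟨ht.1.le, ht.2.le.trans hb.1.2⟩, hh⟩
      linarith [ht.2]
    have u2 : δ / 2 < infDist (q t) Vp := by
      by_contra! hh
      have : t ≤ a := hamax ⟨⟨ha.1.1.trans ht.1.le, ht.2.le.trans hb.1.2⟩, hh⟩
      linarith [ht.1]
    exact hgap _ (hR t) (by linarith [hsum (q t)]) u2.le
  have key := incr_le (c := c) hV h1 hab (C := C) (D := 0) (fun t ht => by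
    have m := hmid t ht
    have c1 : 1 ≤ C := le_max_left _ _
    have c2 : 1 / (2 * μ) ≤ C := le_max_right _ _
    have k1 : 2⁻¹ * ‖q' t‖ ^ 2 ≤ C * (2⁻¹ * ‖q' t‖ ^ 2) := le_mul_of_one_le_left (by positivity) c1
    have k2 : 1 / 2 ≤ C * (V (q t) - c) := by
      calc (1:ℝ) / 2 = 1 / (2 * μ) * μ := by field_simp
        _ ≤ C * (V (q t) - c) := mul_le_mul c2 m hμ.le hC0.le
    nlinarith [sq_nonneg (‖q' t‖ - 1)])
  have h5 := hT a b (ht1.trans ha.1.1) (ht1.trans (ha.1.1.trans hab))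
  have h6 : infDist (q b) Vp ≤ infDist (q a) Vp + dist (q b) (q a) := infDist_le_infDist_add_dist
  rw [dist_eq_norm] at h6
  have h7 := ha.2
  have h8 := hb.2
  simp only [mem_ofPred_eq] at h7 h8
  have h9 : C * (∫ t in a..b, (2⁻¹ * ‖q' t‖ ^ 2 + (V (q t) - c))) ≤ δ / 4 := by
    calc _ ≤ C * (δ / (4 * C)) := mul_le_mul_of_nonneg_left h5 hC0.le
      _ = δ / 4 := by field_simp
  linarith

lemma inner_ii_s11 {N : ℕ} {q q' p p' : ℝ → Euc N} (hq : IsH1loc q q') (hp : IsH1loc p p') (a b : ℝ) :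
    IntegrableOn (fun t => inner ℝ (p' t) (q' t)) (Icc a b) volume := by
  refine Integrable.mono' ((hq.2.1 a b).add (hp.2.1 a b))
    ((H1_meas hp).inner (𝕜 := ℝ) (H1_meas hq)).restrict (Eventually.of_forall fun t => ?_)
  have := norm_inner_le_norm (𝕜 := ℝ) (p' t) (q' t)
  simp only [Pi.add_apply]
  nlinarith [sq_nonneg (‖q' t‖ - ‖p' t‖), sq_nonneg ‖q' t‖, sq_nonneg ‖p' t‖]

lemma EL {N : ℕ} {V : Euc N → ℝ} (hV : ContDiff ℝ 1 V) {c : ℝ} {Vm Vp : Set (Euc N)}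
    {q q' : ℝ → Euc N} (hG : (q, q') ∈ Gamma V c Vm Vp) (hfin : lagJ V c q q' univ < ⊤)
    (hmin : ∀ p p', (p, p') ∈ Gamma V c Vm Vp → lagJ V c q q' univ ≤ lagJ V c p p' univ)
    {f f' : ℝ → Euc N} (hf : IsH1loc f f') {a b : ℝ} (hab : a ≤ b)
    (hf0 : ∀ t, t ∉ Icc a b → f t = 0) (hf0' : ∀ t, t ∉ Icc a b → f' t = 0)
    (hpos : ∀ t ∈ Icc a b, c < V (q t)) :
    (∫ t in a..b, inner ℝ (f' t) (q' t)) + ∫ t in a..b, fderiv ℝ V (q t) (f t) = 0 := by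
  obtain ⟨h1, h2, h3, h4⟩ := hG
  simp only at h1 h2 h3 h4
  have hVc : Continuous V := hV.continuous
  have hDc : Continuous (fderiv ℝ V) := hV.continuous_fderiv one_ne_zero
  have hqc := H1_cont h1
  have hfc := H1_cont hf
  have hH : ∀ x : ℝ, IsH1loc (fun t => q t + x • f t) (fun t => q' t + x • f' t) :=
    fun x => H1_add h1 (H1_smul hf x)
  have hnear : ∀ᶠ x in 𝓝 (0:ℝ), ∀ t ∈ Icc a b, c < V (q t + x • f t) := by
    refine isCompact_Icc.eventually_forall_of_forall_eventually fun t ht => ?_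
    have hc : Continuous fun z : ℝ × ℝ => V (q z.2 + z.1 • f z.2) := by fun_prop
    refine hc.continuousAt.eventually_const_lt ?_
    simpa using hpos t ht
  set F : ℝ → ℝ := fun x => ∫ t in a..b, (2⁻¹ * ‖q' t + x • f' t‖ ^ 2 + (V (q t + x • f t) - c))
    with hF
  have hloc : IsLocalMin F 0 := by
    filter_upwards [hnear] with x hx
    have hge : ∀ t, c ≤ V (q t + x • f t) := by
      intro t
      by_cases ht : t ∈ Icc a b
      · exact (hx t ht).le
      · simpa [hf0 t ht] using h2 t
    have hmem : ((fun t => q t + x • f t), (fun t => q' t + x • f' t)) ∈ Gamma V c Vm Vp := by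
      refine ⟨hH x, hge, fun ε hε => ?_, fun ε hε => ?_⟩
      · refine ((h3 ε hε).and_eventually (eventually_lt_atBot a)).mono ?_
        rintro t ⟨ht, htt⟩
        have : t ∉ Icc a b := fun h => by linarith [h.1]
        simpa [hf0 t this] using ht
      · refine ((h4 ε hε).and_eventually (eventually_gt_atTop b)).mono ?_
        rintro t ⟨ht, htt⟩
        have : t ∉ Icc a b := fun h => by linarith [h.2]
        simpa [hf0 t this] using ht
    have hle := hmin _ _ hmem
    have split : ∀ p p' : ℝ → Euc N, lagJ V c p p' univ =
        lagJ V c p p' (Icc a b) + lagJ V c p p' (Icc a b)ᶜ := by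
      intro p p'
      unfold lagJ
      rw [Measure.restrict_univ]
      exact (lintegral_add_compl _ measurableSet_Icc).symm
    have hco : lagJ V c (fun t => q t + x • f t) (fun t => q' t + x • f' t) (Icc a b)ᶜ =
        lagJ V c q q' (Icc a b)ᶜ := by
      unfold lagJ
      refine setLIntegral_congr_fun measurableSet_Icc.compl fun t ht => ?_
      simp [hf0 t ht, hf0' t ht]
    have hcf : lagJ V c q q' (Icc a b)ᶜ ≠ ⊤ :=
      (lt_of_le_of_lt (lintegral_mono_set (subset_univ _)) hfin).ne
    rw [split, split (fun t => q t + x • f t), hco, ENNReal.add_le_add_iff_right hcf] at hle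
    have conv : ∀ p p' : ℝ → Euc N, IsH1loc p p' → (∀ t, c ≤ V (p t)) →
        lagJ V c p p' (Icc a b) =
          ENNReal.ofReal (∫ t in a..b, (2⁻¹ * ‖p' t‖ ^ 2 + (V (p t) - c))) := by
      intro p p' hp hpc
      rw [intervalIntegral.integral_of_le hab, ← integral_Icc_eq_integral_Ioc,
        ofReal_integral_eq_lintegral_ofReal (lag_intOn hVc c hp a b)]
      · rfl
      · refine Eventually.of_forall fun t => ?_
        have := hpc t
        have := sq_nonneg ‖p' t‖
        simp only [Pi.zero_apply]
        linarith
    rw [conv _ _ h1 h2, conv _ _ (hH x) hge, ENNReal.ofReal_le_ofReal_iff] at hle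
    · simpa [hF] using hle
    · refine intervalIntegral.integral_nonneg hab fun t _ => ?_
      have := hge t
      have := sq_nonneg ‖q' t + x • f' t‖
      linarith
  have hpot : HasDerivAt (fun x : ℝ => ∫ t in a..b, (V (q t + x • f t) - c))
      (∫ t in a..b, fderiv ℝ V (q t) (f t)) 0 := by
    have hcont : Continuous fun z : ℝ × ℝ => fderiv ℝ V (q z.2 + z.1 • f z.2) (f z.2) := by
      refine Continuous.clm_apply (hDc.comp (by fun_prop)) (by fun_prop)
    obtain ⟨C, hC⟩ := ((isCompact_Icc (a := (-1:ℝ)) (b := 1)).prod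
      (isCompact_Icc (a := a) (b := b))).exists_bound_of_continuousOn hcont.continuousOn
    have := (intervalIntegral.hasDerivAt_integral_of_dominated_loc_of_deriv_le (μ := volume)
      (a := a) (b := b) (𝕜 := ℝ)
      (F := fun x t => V (q t + x • f t) - c)
      (F' := fun x t => fderiv ℝ V (q t + x • f t) (f t)) (x₀ := 0) (bound := fun _ => C)
      (s := Icc (-1) 1) (Icc_mem_nhds (by norm_num) (by norm_num)) ?_ ?_ ?_ ?_ ?_ ?_).2
    · simpa using this
    · refine Eventually.of_forall fun x => ?_
      exact Continuous.aestronglyMeasurable (by fun_prop)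
    · exact Continuous.intervalIntegrable (by fun_prop) _ _
    · exact (hcont.comp (Continuous.prodMk_right (0:ℝ))).aestronglyMeasurable
    · refine Eventually.of_forall fun t ht x hx => ?_
      rw [uIoc_of_le hab] at ht
      exact hC (x, t) ⟨hx, Ioc_subset_Icc_self ht⟩
    · exact intervalIntegrable_const
    · refine Eventually.of_forall fun t ht x hx => ?_
      have hd : HasFDerivAt V (fderiv ℝ V (q t + x • f t)) (q t + x • f t) :=
        (hV.differentiable one_ne_zero _).hasFDerivAt
      have hl : HasDerivAt (fun x : ℝ => q t + x • f t) (f t) x := by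
        simpa using ((hasDerivAt_id x).smul_const (f t)).const_add (q t)
      exact (hd.comp_hasDerivAt x hl).sub_const c
  have i1 : IntervalIntegrable (fun t => ‖q' t‖ ^ 2) volume a b :=
    (intervalIntegrable_iff_integrableOn_Icc_of_le hab).2 (h1.2.1 a b)
  have i2 : IntervalIntegrable (fun t => ‖f' t‖ ^ 2) volume a b :=
    (intervalIntegrable_iff_integrableOn_Icc_of_le hab).2 (hf.2.1 a b)
  have i3 : IntervalIntegrable (fun t => inner ℝ (f' t) (q' t)) volume a b :=
    (intervalIntegrable_iff_integrableOn_Icc_of_le hab).2 (inner_ii_s11 h1 hf a b)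
  have hFe : F = fun x => (2⁻¹ * (∫ t in a..b, ‖q' t‖ ^ 2) +
      x * (∫ t in a..b, inner ℝ (f' t) (q' t)) + x ^ 2 * (2⁻¹ * ∫ t in a..b, ‖f' t‖ ^ 2)) +
      ∫ t in a..b, (V (q t + x • f t) - c) := by
    funext x
    have i4 : IntervalIntegrable (fun t => V (q t + x • f t) - c) volume a b :=
      Continuous.intervalIntegrable (by fun_prop) _ _
    rw [← intervalIntegral.integral_const_mul, ← intervalIntegral.integral_const_mul,
      ← intervalIntegral.integral_const_mul, ← intervalIntegral.integral_const_mul,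
      ← intervalIntegral.integral_add (i1.const_mul _) (i3.const_mul _),
      ← intervalIntegral.integral_add ((i1.const_mul _).add (i3.const_mul _))
        ((i2.const_mul _).const_mul _),
      ← intervalIntegral.integral_add (((i1.const_mul _).add (i3.const_mul _)).add
        ((i2.const_mul _).const_mul _)) i4]
    simp only [hF]
    congr 1
    funext t
    rw [norm_add_sq_real, norm_smul, inner_smul_right, real_inner_comm, mul_pow, Real.norm_eq_abs,
      sq_abs]
    ring
  have hder : HasDerivAt F ((∫ t in a..b, inner ℝ (f' t) (q' t)) +
      ∫ t in a..b, fderiv ℝ V (q t) (f t)) 0 := by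
    rw [hFe]
    refine HasDerivAt.fun_add ?_ hpot
    have e1 := ((hasDerivAt_id (0:ℝ)).mul_const (∫ t in a..b, inner ℝ (f' t) (q' t))).const_add
      (2⁻¹ * (∫ t in a..b, ‖q' t‖ ^ 2))
    have e2 := ((hasDerivAt_id (0:ℝ)).pow 2).mul_const (2⁻¹ * ∫ t in a..b, ‖f' t‖ ^ 2)
    simpa using e1.fun_add e2
  exact hloc.hasDerivAt_eq_zero hder

lemma hat {N : ℕ} {V : Euc N → ℝ} (hV : ContDiff ℝ 1 V) {c : ℝ} {Vm Vp : Set (Euc N)}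
    {q q' : ℝ → Euc N} (hG : (q, q') ∈ Gamma V c Vm Vp) (hfin : lagJ V c q q' univ < ⊤)
    (hmin : ∀ p p', (p, p') ∈ Gamma V c Vm Vp → lagJ V c q q' univ ≤ lagJ V c p p' univ)
    {s h k : ℝ} (hh : 0 < h) (hk : 0 < k) (hpos : ∀ t ∈ Icc s (s + h + k), c < V (q t))
    (v : Euc N) :
    h⁻¹ * inner ℝ v (q (s + h) - q s) - k⁻¹ * inner ℝ v (q (s + h + k) - q (s + h)) +
      ((∫ t in s..(s + h), ((t - s) * h⁻¹) * fderiv ℝ V (q t) v) +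
      ∫ t in (s + h)..(s + h + k), (1 - (t - (s + h)) * k⁻¹) * fderiv ℝ V (q t) v) = 0 := by
  set g3 : ℝ → Euc N := spl (s + h + k) (fun t => v + (t - (s + h)) • (-(k⁻¹ • v)))
    (fun t => 0 + (t - 0) • (0 : Euc N)) with hg3
  set g3' : ℝ → Euc N := spl (s + h + k) (fun _ => -(k⁻¹ • v)) (fun _ => (0 : Euc N)) with hg3'
  set g2 : ℝ → Euc N := spl (s + h) (fun t => 0 + (t - s) • (h⁻¹ • v)) g3 with hg2
  set g2' : ℝ → Euc N := spl (s + h) (fun _ => h⁻¹ • v) g3' with hg2'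
  set f : ℝ → Euc N := spl s (fun t => 0 + (t - 0) • (0 : Euc N)) g2 with hf
  set f' : ℝ → Euc N := spl s (fun _ => (0 : Euc N)) g2' with hf'
  have H3 : IsH1loc g3 g3' := H1_spl (H1_aff _ _ _) (H1_aff _ _ _) _ (by
    simp [smul_smul, hk.ne'])
  have H2 : IsH1loc g2 g2' := H1_spl (H1_aff _ _ _) H3 _ (by
    simp [hg3, spl, smul_smul, hh.ne', hk.le])
  have H1 : IsH1loc f f' := H1_spl (H1_aff _ _ _) H2 _ (by
    simp [hg2, spl, hh.le])
  have A1 : ∀ t ∈ Ioc s (s + h), f t = ((t - s) * h⁻¹) • v ∧ f' t = h⁻¹ • v := by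
    intro t ht
    have n1 : ¬ t ≤ s := not_le.2 ht.1
    simp [hf, hf', hg2, hg2', spl, n1, ht.2, smul_smul]
  have A2 : ∀ t ∈ Ioc (s + h) (s + h + k),
      f t = (1 - (t - (s + h)) * k⁻¹) • v ∧ f' t = -(k⁻¹ • v) := by
    intro t ht
    have n1 : ¬ t ≤ s := not_le.2 (by linarith [ht.1])
    have n2 : ¬ t ≤ s + h := not_le.2 (by linarith [ht.1])
    simp [hf, hf', hg2, hg2', hg3, hg3', spl, n1, n2, ht.2, smul_smul, sub_smul]
    abel
  have A3 : ∀ t, t ∉ Icc s (s + h + k) → f t = 0 ∧ f' t = 0 := by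
    intro t ht
    by_cases n1 : t ≤ s
    · simp [hf, hf', spl, n1]
    · have n3 : ¬ t ≤ s + h + k := fun hx => ht ⟨by linarith, hx⟩
      have n2 : ¬ t ≤ s + h := fun hx => n3 (by linarith)
      simp [hf, hf', hg2, hg2', hg3, hg3', spl, n1, n2, n3]
  have key := EL hV hG hfin hmin H1 (by linarith : s ≤ s + h + k) (fun t ht => (A3 t ht).1)
    (fun t ht => (A3 t ht).2) hpos
  have h1 : IsH1loc q q' := hG.1
  have hDc : Continuous (fderiv ℝ V) := hV.continuous_fderiv one_ne_zero
  have hqc := H1_cont h1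
  have hfc := H1_cont H1
  have j1 : ∀ a b : ℝ, a ≤ b → IntervalIntegrable (fun t => inner ℝ (f' t) (q' t)) volume a b :=
    fun a b hab => (intervalIntegrable_iff_integrableOn_Icc_of_le hab).2 (inner_ii_s11 h1 H1 a b)
  have j2 : ∀ a b : ℝ, IntervalIntegrable (fun t => fderiv ℝ V (q t) (f t)) volume a b :=
    fun a b => ((hDc.comp hqc).clm_apply hfc).intervalIntegrable _ _
  have hin : ∀ (w : Euc N) (a b : ℝ), ∫ t in a..b, inner ℝ w (q' t) = inner ℝ w (q b - q a) := by
    intro w a b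
    rw [h1.2.2 a b]
    exact (innerSL ℝ w).intervalIntegral_comp_comm (H1_ii h1 a b)
  rw [← intervalIntegral.integral_add_adjacent_intervals (j1 s (s + h) (by linarith))
    (j1 (s + h) (s + h + k) (by linarith)),
    ← intervalIntegral.integral_add_adjacent_intervals (j2 s (s + h)) (j2 (s + h) (s + h + k))]
    at key
  have c1 : ∫ t in s..(s + h), inner ℝ (f' t) (q' t) = h⁻¹ * inner ℝ v (q (s + h) - q s) := by
    rw [← real_inner_smul_left, ← hin]
    apply intervalIntegral.integral_congr_ae
    refine Eventually.of_forall fun t ht => ?_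
    rw [uIoc_of_le (by linarith)] at ht
    simp only [(A1 t ht).2]
  have c2 : ∫ t in (s + h)..(s + h + k), inner ℝ (f' t) (q' t) =
      - (k⁻¹ * inner ℝ v (q (s + h + k) - q (s + h))) := by
    rw [← real_inner_smul_left, ← inner_neg_left, ← hin]
    apply intervalIntegral.integral_congr_ae
    refine Eventually.of_forall fun t ht => ?_
    rw [uIoc_of_le (by linarith)] at ht
    simp only [(A2 t ht).2]
  have c3 : ∫ t in s..(s + h), fderiv ℝ V (q t) (f t) =
      ∫ t in s..(s + h), ((t - s) * h⁻¹) * fderiv ℝ V (q t) v := by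
    apply intervalIntegral.integral_congr_ae
    refine Eventually.of_forall fun t ht => ?_
    rw [uIoc_of_le (by linarith)] at ht
    simp only [(A1 t ht).1, map_smul, smul_eq_mul]
  have c4 : ∫ t in (s + h)..(s + h + k), fderiv ℝ V (q t) (f t) =
      ∫ t in (s + h)..(s + h + k), (1 - (t - (s + h)) * k⁻¹) * fderiv ℝ V (q t) v := by
    apply intervalIntegral.integral_congr_ae
    refine Eventually.of_forall fun t ht => ?_
    rw [uIoc_of_le (by linarith)] at ht
    simp only [(A2 t ht).1, map_smul, smul_eq_mul]
  rw [c1, c2, c3, c4] at key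
  linarith

lemma connected_limit {N : ℕ} {q : ℝ → Euc N} (hqc : Continuous q) {R : ℝ} (hR : ∀ t, ‖q t‖ ≤ R)
    {S : Set ℝ} (hSne : S.Nonempty) : IsConnected (⋂ t ∈ S, closure (q '' Ici t)) := by
  have hcomp : ∀ t, IsCompact (closure (q '' Ici t)) := by
    intro t
    refine (isCompact_closedBall (0 : Euc N) R).of_isClosed_subset isClosed_closure ?_
    refine closure_minimal ?_ isClosed_closedBall
    rintro _ ⟨s, -, rfl⟩
    simpa using hR s
  have hconn : ∀ t, IsPreconnected (closure (q '' Ici t)) := fun t =>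
    (isPreconnected_Ici.image q hqc.continuousOn).closure
  have hdir : Directed (· ⊇ ·) fun t : S => closure (q '' Ici (t : ℝ)) := by
    intro s t
    rcases le_total s t with h | h
    · exact ⟨t, closure_mono (image_mono (Ici_subset_Ici.2 h)), subset_rfl⟩
    · exact ⟨s, subset_rfl, closure_mono (image_mono (Ici_subset_Ici.2 h))⟩
  have : Nonempty S := hSne.to_subtype
  rw [biInter_eq_iInter]
  have hclosed : IsClosed (⋂ t : S, closure (q '' Ici (t : ℝ))) :=
    isClosed_iInter fun _ => isClosed_closure
  have hC : IsCompact (⋂ t : S, closure (q '' Ici (t : ℝ))) :=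
    (hcomp _).of_isClosed_subset hclosed (iInter_subset _ (Classical.arbitrary S))
  refine ⟨?_, ?_⟩
  · exact IsCompact.nonempty_iInter_of_directed_nonempty_isCompact_isClosed _ hdir
      (fun t => (nonempty_Ici.image q).closure) (fun t => hcomp t) (fun t => isClosed_closure)
  · rw [isPreconnected_iff_subset_of_disjoint_closed]
    intro u v hu hv hsub hdisj
    set C := ⋂ t : S, closure (q '' Ici (t : ℝ)) with hCdef
    have hd : Disjoint (C ∩ u) (C ∩ v) := by
      rw [Set.disjoint_iff_inter_eq_empty, ← hdisj]
      ext x; simp only [mem_inter_iff]; tauto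
    obtain ⟨U, W, hU, hW, hCU, hCW, hUW⟩ :=
      SeparatedNhds.of_isCompact_isCompact (hC.inter_right hu) (hC.inter_right hv) hd
    obtain ⟨t, ht⟩ := exists_subset_nhds_of_isCompact' hdir (fun t => hcomp t)
      (fun t => isClosed_closure) (U := U ∪ W) (fun x hx => (hU.union hW).mem_nhds (by
        rcases hsub hx with h | h
        · exact Or.inl (hCU ⟨hx, h⟩)
        · exact Or.inr (hCW ⟨hx, h⟩)))
    have hCt : C ⊆ closure (q '' Ici (t : ℝ)) := iInter_subset _ t
    rcases isPreconnected_iff_subset_of_disjoint.1 (hconn t) U W hU hW ht (by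
      rw [hUW.inter_eq, inter_empty]) with h | h
    · left
      intro x hx
      rcases hsub hx with h' | h'
      · exact h'
      · exact absurd (hCW ⟨hx, h'⟩) (Set.disjoint_left.1 hUW (h (hCt hx)))
    · right
      intro x hx
      rcases hsub hx with h' | h'
      · exact absurd (h (hCt hx)) (Set.disjoint_left.1 hUW (hCU ⟨hx, h'⟩))
      · exact h'

lemma deriv_tendsto {N : ℕ} {V : Euc N → ℝ} (hV : ContDiff ℝ 1 V) {c : ℝ} {Vm Vp : Set (Euc N)}
    {q q' : ℝ → Euc N} (hG : (q, q') ∈ Gamma V c Vm Vp) (hfin : lagJ V c q q' univ < ⊤)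
    (hmin : ∀ p p', (p, p') ∈ Gamma V c Vm Vp → lagJ V c q q' univ ≤ lagJ V c p p' univ)
    {R : ℝ} (hR : ∀ t, ‖q t‖ ≤ R) {T0 : ℝ} (hpos : ∀ t, T0 ≤ t → c < V (q t)) :
    Tendsto (deriv q) atTop (𝓝 0) := by
  have hDc : Continuous (fderiv ℝ V) := hV.continuous_fderiv one_ne_zero
  obtain ⟨M0, hM0⟩ := (isCompact_closedBall (0 : Euc N) R).exists_bound_of_continuousOn
    hDc.continuousOn
  set M : ℝ := max M0 1
  have hM1 : 0 < M := lt_of_lt_of_le one_pos (le_max_right _ _)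
  have hM : ∀ t, ‖fderiv ℝ V (q t)‖ ≤ M := fun t =>
    (hM0 _ (by simpa using hR t)).trans (le_max_left _ _)
  rw [Metric.tendsto_atTop]
  intro ε hε
  set k : ℝ := ε / (8 * M) with hk
  have hk0 : 0 < k := by positivity
  obtain ⟨T, hT⟩ := osc hV.continuous hG.1 hG.2.1 hfin k hk0 (ε := ε / 4 * k) (by positivity)
  refine ⟨max T T0, fun s hs => ?_⟩
  have hsT : T ≤ s := (le_max_left _ _).trans hs
  have hsT0 : T0 ≤ s := (le_max_right _ _).trans hs
  have quot : ∀ h, 0 < h → h ≤ k → ‖h⁻¹ • (q (s + h) - q s)‖ ≤ ε / 2 := by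
    intro h hh hhk
    set D := q (s + h) - q s with hD
    have key := hat hV hG hfin hmin hh hk0 (s := s)
      (fun t ht => hpos t (hsT0.trans ht.1)) D
    have o := hT (s + h) (by linarith) k ⟨hk0.le, le_rfl⟩
    set P := q (s + h + k) - q (s + h)
    have b0 : ∀ t, ‖fderiv ℝ V (q t) D‖ ≤ M * ‖D‖ := fun t =>
      (ContinuousLinearMap.le_opNorm _ _).trans (mul_le_mul_of_nonneg_right (hM t) (norm_nonneg _))
    have b1 : ‖∫ t in s..(s + h), ((t - s) * h⁻¹) * fderiv ℝ V (q t) D‖ ≤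
        M * ‖D‖ * |s + h - s| := by
      apply intervalIntegral.norm_integral_le_of_norm_le_const
      intro t ht
      rw [uIoc_of_le (by linarith)] at ht
      have e1 : 0 ≤ (t - s) * h⁻¹ := mul_nonneg (by linarith [ht.1]) (by positivity)
      have e2 : (t - s) * h⁻¹ ≤ 1 := by
        rw [← div_eq_mul_inv, div_le_one hh]; linarith [ht.2]
      rw [norm_mul, Real.norm_eq_abs, abs_of_nonneg e1]
      exact (mul_le_of_le_one_left (norm_nonneg _) e2).trans (b0 t)
    have b2 : ‖∫ t in (s + h)..(s + h + k), (1 - (t - (s + h)) * k⁻¹) * fderiv ℝ V (q t) D‖ ≤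
        M * ‖D‖ * |s + h + k - (s + h)| := by
      apply intervalIntegral.norm_integral_le_of_norm_le_const
      intro t ht
      rw [uIoc_of_le (by linarith)] at ht
      have e1 : 0 ≤ (t - (s + h)) * k⁻¹ := mul_nonneg (by linarith [ht.1]) (by positivity)
      have e2 : (t - (s + h)) * k⁻¹ ≤ 1 := by
        rw [← div_eq_mul_inv, div_le_one hk0]; linarith [ht.2]
      rw [norm_mul, Real.norm_eq_abs, abs_of_nonneg (by linarith)]
      exact (mul_le_of_le_one_left (norm_nonneg _) (by linarith)).trans (b0 t)
    rw [Real.norm_eq_abs, abs_le] at b1 b2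
    have e3 : |s + h - s| = h := by rw [add_sub_cancel_left, abs_of_pos hh]
    have e4 : |s + h + k - (s + h)| = k := by rw [add_sub_cancel_left, abs_of_pos hk0]
    rw [e3] at b1
    rw [e4] at b2
    have b3 : k⁻¹ * inner ℝ D P ≤ ‖D‖ * (ε / 4) := by
      calc k⁻¹ * inner ℝ D P ≤ k⁻¹ * (‖D‖ * (ε / 4 * k)) := by
            refine mul_le_mul_of_nonneg_left ?_ (by positivity)
            exact (real_inner_le_norm _ _).trans (mul_le_mul_of_nonneg_left o (norm_nonneg _))
        _ = _ := by field_simp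
    rw [real_inner_self_eq_norm_sq] at key
    have hMk : M * k = ε / 8 := by rw [hk]; field_simp
    have b4 : h⁻¹ * ‖D‖ ^ 2 ≤ ‖D‖ * (ε / 2) := by
      have : M * ‖D‖ * h ≤ M * ‖D‖ * k := by gcongr
      have e5 : M * ‖D‖ * k = ‖D‖ * (ε / 8) := by rw [← hMk]; ring
      linarith [b1.1, b2.1]
    rw [norm_smul, Real.norm_eq_abs, abs_of_pos (inv_pos.2 hh)]
    rcases (norm_nonneg D).eq_or_lt with h0 | h0
    · rw [← h0]; simp; positivity
    · have : ‖D‖ * (h⁻¹ * ‖D‖) ≤ ‖D‖ * (ε / 2) := by linarith [show ‖D‖ * (h⁻¹ * ‖D‖) = h⁻¹ * ‖D‖ ^ 2 by ring]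
      exact le_of_mul_le_mul_left this h0
  rw [dist_zero_right]
  by_cases hd : DifferentiableAt ℝ q s
  · have hlim := hd.hasDerivAt.tendsto_slope_zero_right.norm
    have : ‖deriv q s‖ ≤ ε / 2 := by
      refine le_of_tendsto hlim ?_
      filter_upwards [Ioc_mem_nhdsGT hk0] with h hh
      exact quot h hh.1 hh.2
    linarith
  · rw [deriv_zero_of_not_differentiableAt hd]; simpa using hε

lemma grad_zero {N : ℕ} {V : Euc N → ℝ} (hV : ContDiff ℝ 1 V) {c : ℝ} {Vm Vp : Set (Euc N)}
    {q q' : ℝ → Euc N} (hG : (q, q') ∈ Gamma V c Vm Vp) (hfin : lagJ V c q q' univ < ⊤)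
    (hmin : ∀ p p', (p, p') ∈ Gamma V c Vm Vp → lagJ V c q q' univ ≤ lagJ V c p p' univ)
    {T0 : ℝ} (hpos : ∀ t, T0 ≤ t → c < V (q t)) {ξ : Euc N}
    (hξ : ∀ T, ξ ∈ closure (q '' Ici T)) : gradient V ξ = 0 := by
  have hDc : Continuous (fderiv ℝ V) := hV.continuous_fderiv one_ne_zero
  by_contra hg
  set g := gradient V ξ with hgdef
  have hgp : 0 < ‖g‖ := norm_pos_iff.2 hg
  have hgg : fderiv ℝ V ξ g = ‖g‖ ^ 2 := by
    rw [← real_inner_self_eq_norm_sq]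
    rw [hgdef, gradient, InnerProductSpace.toDual_symm_apply]
  have hcx : Continuous fun x => fderiv ℝ V x g := hDc.clm_apply continuous_const
  have hev : ∀ᶠ x in 𝓝 ξ, ‖g‖ ^ 2 / 2 < fderiv ℝ V x g := by
    refine hcx.continuousAt.eventually_const_lt ?_
    show ‖g‖ ^ 2 / 2 < fderiv ℝ V ξ g
    rw [hgg]; nlinarith
  obtain ⟨r, hr, hball⟩ := Metric.eventually_nhds_iff.1 hev
  set ε := min (r / 2) (‖g‖ / 16) with hε
  have hε0 : 0 < ε := by positivity
  obtain ⟨T, hT⟩ := osc hV.continuous hG.1 hG.2.1 hfin 2 two_pos hε0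
  obtain ⟨_, ⟨s, hs, rfl⟩, hsd⟩ := Metric.mem_closure_iff.1 (hξ (max T T0)) (r / 2) (by linarith)
  have hsT : T ≤ s := (le_max_left _ _).trans hs
  have hsT0 : T0 ≤ s := (le_max_right _ _).trans hs
  have key := hat hV hG hfin hmin one_pos one_pos (s := s)
      (fun t ht => hpos t (hsT0.trans ht.1)) g
  have hlow : ∀ t ∈ Icc s (s + 2), ‖g‖ ^ 2 / 2 ≤ fderiv ℝ V (q t) g := by
    intro t ht
    have h1 := hT s hsT (t - s) ⟨by linarith [ht.1], by linarith [ht.2]⟩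
    rw [add_sub_cancel, ← dist_eq_norm] at h1
    refine (hball ?_).le
    have := dist_triangle (q t) (q s) ξ
    rw [dist_comm (q s) ξ] at this
    linarith [min_le_left (r / 2) (‖g‖ / 16)]
  have hqc := H1_cont hG.1
  simp only at hqc
  have hcq : Continuous fun t => fderiv ℝ V (q t) g := hcx.comp hqc
  have l1 : ∫ t in s..(s + 1), (t - s) * (‖g‖ ^ 2 / 2) ≤
      ∫ t in s..(s + 1), ((t - s) * 1⁻¹) * fderiv ℝ V (q t) g := by
    refine intervalIntegral.integral_mono_on (by linarith)
      (Continuous.intervalIntegrable (by fun_prop) _ _)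
      (Continuous.intervalIntegrable (by fun_prop) _ _) fun t ht => ?_
    rw [inv_one, mul_one]
    exact mul_le_mul_of_nonneg_left (hlow t ⟨ht.1, by linarith [ht.2]⟩) (by linarith [ht.1])
  have l2 : 0 ≤ ∫ t in (s + 1)..(s + 1 + 1), (1 - (t - (s + 1)) * 1⁻¹) * fderiv ℝ V (q t) g := by
    refine intervalIntegral.integral_nonneg (by linarith) fun t ht => ?_
    rw [inv_one, mul_one]
    have := hlow t ⟨by linarith [ht.1], by linarith [ht.2]⟩
    exact mul_nonneg (by linarith [ht.2]) (le_trans (by positivity) this)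
  have l3 : ∫ t in s..(s + 1), (t - s) * (‖g‖ ^ 2 / 2) = ‖g‖ ^ 2 / 4 := by
    rw [intervalIntegral.integral_mul_const,
      intervalIntegral.integral_comp_sub_right (fun t => t) s]
    simp; ring
  have n1 := hT s hsT 1 ⟨by norm_num, by norm_num⟩
  have n2 := hT (s + 1) (by linarith) 1 ⟨by norm_num, by norm_num⟩
  have m1 := (abs_le.1 (abs_real_inner_le_norm g (q (s + 1) - q s))).1
  have m2 := (abs_le.1 (abs_real_inner_le_norm g (q (s + 1 + 1) - q (s + 1)))).2
  have n1' : ‖g‖ * ‖q (s + 1) - q s‖ ≤ ‖g‖ * (‖g‖ / 16) :=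
    mul_le_mul_of_nonneg_left (n1.trans (by linarith [min_le_right (r / 2) (‖g‖ / 16)])) hgp.le
  have n2' : ‖g‖ * ‖q (s + 1 + 1) - q (s + 1)‖ ≤ ‖g‖ * (‖g‖ / 16) :=
    mul_le_mul_of_nonneg_left (n2.trans (by linarith [min_le_right (r / 2) (‖g‖ / 16)])) hgp.le
  rw [inv_one, one_mul, one_mul] at key
  simp only [inv_one] at l1 l2
  nlinarith

lemma core {N : ℕ} {V : Euc N → ℝ} (hV : ContDiff ℝ 1 V) {c : ℝ} {Vm Vp : Set (Euc N)}
    (hVp : IsClosed Vp) (hsplit : {x | V x ≤ c} = Vm ∪ Vp) (hne : Vp.Nonempty)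
    {q q' : ℝ → Euc N} (hG : (q, q') ∈ Gamma V c Vm Vp) (hfin : lagJ V c q q' univ < ⊤)
    (hmin : ∀ p p', (p, p') ∈ Gamma V c Vm Vp → lagJ V c q q' univ ≤ lagJ V c p p' univ)
    {R : ℝ} (hR : ∀ t, ‖q t‖ ≤ R)
    (hconv : ∀ δ > 0, ∀ᶠ t in atTop, infDist (q t) Vp < δ)
    {S : Set ℝ} (hSne : S.Nonempty) (hS : ∀ t ∈ S, ∀ s, t ≤ s → s ∈ S)
    (hSV : ∀ t ∈ S, q t ∉ Vm ∧ q t ∉ Vp) :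
    Tendsto (deriv q) atTop (𝓝 0) ∧ IsClosed (⋂ t ∈ S, closure (q '' Ici t)) ∧
    IsConnected (⋂ t ∈ S, closure (q '' Ici t)) ∧
    (⋂ t ∈ S, closure (q '' Ici t)) ⊆ Vp ∩ {ξ | V ξ = c ∧ gradient V ξ = 0} := by
  have hqc : Continuous q := H1_cont hG.1
  obtain ⟨T0, hT0⟩ := id hSne
  have hpos : ∀ t, T0 ≤ t → c < V (q t) := by
    intro t ht
    by_contra! hle
    have : q t ∈ Vm ∪ Vp := by rw [← hsplit]; exact hle
    have h := hSV t (hS T0 hT0 t ht)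
    rcases this with h' | h'
    · exact h.1 h'
    · exact h.2 h'
  refine ⟨deriv_tendsto hV hG hfin hmin hR hpos,
    isClosed_biInter fun _ _ => isClosed_closure, connected_limit hqc hR hSne, ?_⟩
  intro ξ hξ
  have hξ' : ∀ T, ξ ∈ closure (q '' Ici T) := by
    intro T
    have h1 := mem_iInter₂.1 hξ (max T T0) (hS T0 hT0 _ (le_max_right _ _))
    exact closure_mono (image_mono (Ici_subset_Ici.2 (le_max_left _ _))) h1
  have hξp : ξ ∈ Vp := by
    rw [hVp.mem_iff_infDist_zero hne]
    refine le_antisymm (le_of_forall_pos_le_add fun ε hε => ?_) infDist_nonneg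
    obtain ⟨T, hT⟩ := eventually_atTop.1 (hconv ε hε)
    have hcl : IsClosed {x : Euc N | infDist x Vp ≤ 0 + ε} :=
      isClosed_le (continuous_infDist_pt _) continuous_const
    refine closure_minimal ?_ hcl (hξ' T)
    rintro _ ⟨t, ht, rfl⟩
    simpa using (hT t ht).le
  refine ⟨hξp, le_antisymm ?_ ?_, grad_zero hV hG hfin hmin hpos hξ'⟩
  · have : ξ ∈ {x | V x ≤ c} := by rw [hsplit]; exact Or.inr hξp
    exact this
  · have hcl : IsClosed {x : Euc N | c ≤ V x} := isClosed_le continuous_const hV.continuous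
    refine closure_minimal ?_ hcl (hξ' 0)
    rintro _ ⟨t, ht, rfl⟩
    exact hG.2.1 t

/-- Lemma 2.11 (limit sets): when the connecting time interval of a minimizer is unbounded,
the derivative vanishes at infinity and the corresponding limit set consists of critical
points of `V` at level `c`. -/
theorem minimizer_limit_sets {N : ℕ} (hN : 0 < N) (V : Euc N → ℝ) (hV : ContDiff ℝ 1 V)
    (c : ℝ) (Vm Vp : Set (Euc N)) (hVm : IsClosed Vm) (hVp : IsClosed Vp)
    (hsplit : {x | V x ≤ c} = Vm ∪ Vp) (hsep : 0 < setDist Vm Vp)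
    (R : ℝ) (hR : 0 < R) (hcoer : Coercive V c Vm Vp R)
    (q q' : ℝ → Euc N) (hq : MemM V c Vm Vp R q q') :
    (omegaQ Vm Vp q = ⊤ →
      Tendsto (deriv q) atTop (𝓝 0) ∧
      IsClosed (omegaLimitSet Vm q) ∧ IsConnected (omegaLimitSet Vm q) ∧
      omegaLimitSet Vm q ⊆ Vp ∩ {ξ | V ξ = c ∧ gradient V ξ = 0}) ∧
    (alphaQ Vm q = ⊥ →
      Tendsto (deriv q) atBot (𝓝 0) ∧
      IsClosed (alphaLimitSet Vm Vp q) ∧ IsConnected (alphaLimitSet Vm Vp q) ∧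
      alphaLimitSet Vm Vp q ⊆ Vm ∩ {ξ | V ξ = c ∧ gradient V ξ = 0}) := by
  have hVc : Continuous V := hV.continuous
  obtain ⟨hG, -, hJ, hqR⟩ := hq
  have hd : ∀ x ∈ Vm, ∀ y ∈ Vp, setDist Vm Vp ≤ dist x y := by
    intro x hx y hy
    refine csInf_le ⟨0, ?_⟩ ⟨(x, y), ⟨hx, hy⟩, rfl⟩
    rintro _ ⟨p, -, rfl⟩
    exact dist_nonneg
  have hne2 : (Vm ×ˢ Vp).Nonempty := by
    by_contra h
    rw [not_nonempty_iff_eq_empty] at h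
    simp [setDist, h] at hsep
  have hnm : Vm.Nonempty := hne2.fst
  have hnp : Vp.Nonempty := hne2.snd
  set d := setDist Vm Vp with hdd
  have hfin : lagJ V c q q' univ < ⊤ := by
    rw [hJ]; exact mc_lt_top hVc hsplit hsep hd hnp hnm hG
  have hmin : ∀ p p', (p, p') ∈ Gamma V c Vm Vp → lagJ V c q q' univ ≤ lagJ V c p p' univ := by
    intro p p' hp
    rw [hJ]
    exact iInf₂_le (p, p') hp
  have hd' : ∀ x ∈ Vp, ∀ y ∈ Vm, d ≤ dist x y := fun x hx y hy => by
    rw [dist_comm]; exact hd y hy x hx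
  have hsplit' : {x | V x ≤ c} = Vp ∪ Vm := by rw [hsplit, union_comm]
  have hG' := Gamma_rev hG
  have revu : ∀ p p' : ℝ → Euc N,
      lagJ V c (fun t => p (-t)) (fun t => - p' (-t)) univ = lagJ V c p p' univ := by
    intro p p'
    have := lagJ_rev V c p p' univ
    rwa [preimage_univ] at this
  have hfin' : lagJ V c (fun t => q (-t)) (fun t => - q' (-t)) univ < ⊤ := by
    rw [revu]; exact hfin
  have hmin' : ∀ p p', (p, p') ∈ Gamma V c Vp Vm →
      lagJ V c (fun t => q (-t)) (fun t => - q' (-t)) univ ≤ lagJ V c p p' univ := by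
    intro p p' hp
    rw [revu, ← revu p p']
    exact hmin _ _ (Gamma_rev hp)
  have hqR' : ∀ t, ‖(fun t => q (-t)) t‖ ≤ R := fun t => hqR (-t)
  have conv : ∀ δ > 0, ∀ᶠ t in atTop, infDist (q t) Vp < δ := fun δ hδ =>
    tendsto_Vp hVc hsplit hsep hd hnp hnm hG hfin hqR hδ
  have conv' : ∀ δ > 0, ∀ᶠ t in atTop, infDist ((fun t => q (-t)) t) Vm < δ := fun δ hδ =>
    tendsto_Vp hVc hsplit' hsep hd' hnm hnp hG' hfin' hqR' hδ
  refine ⟨fun hω => ?_, fun hα => ?_⟩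
  · obtain ⟨T, hT⟩ := eventually_atTop.1 (conv d hsep)
    have hαT : alphaQ Vm q ≤ (T : EReal) := by
      refine sSup_le ?_
      rintro _ ⟨t, rfl, ht⟩
      by_contra! hlt
      have hTt : T < t := EReal.coe_lt_coe_iff.1 hlt
      obtain ⟨y, hy, hy'⟩ := (infDist_lt_iff hnp).1 (hT t hTt.le)
      exact absurd (hd _ ht y hy) (not_le.2 hy')
    refine core hV hVp hsplit hnp hG hfin hmin hqR conv
      (S := {t : ℝ | alphaQ Vm q < (t : EReal)}) ⟨T + 1, ?_⟩ ?_ ?_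
    · exact lt_of_le_of_lt hαT (EReal.coe_lt_coe_iff.2 (by linarith))
    · intro t ht s hts
      exact lt_of_lt_of_le ht (EReal.coe_le_coe_iff.2 hts)
    · intro t ht
      refine ⟨fun h => ?_, fun h => ?_⟩
      · have : (t : EReal) ≤ alphaQ Vm q := le_sSup ⟨t, rfl, h⟩
        exact absurd ht (not_lt.2 this)
      · have : omegaQ Vm Vp q ≤ (t : EReal) := sInf_le ⟨t, rfl, ht, h⟩
        rw [hω] at this
        exact absurd this (not_le.2 (EReal.coe_lt_top t))
  · obtain ⟨T, hT⟩ := eventually_atTop.1 (conv' d hsep)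
    have hωT : ((-T : ℝ) : EReal) ≤ omegaQ Vm Vp q := by
      refine le_sInf ?_
      rintro _ ⟨t, rfl, -, ht⟩
      by_contra! hlt
      have hTt : t < -T := EReal.coe_lt_coe_iff.1 hlt
      obtain ⟨y, hy, hy'⟩ := (infDist_lt_iff hnm).1 (hT (-t) (by linarith))
      simp only [neg_neg] at hy'
      exact absurd (hd' _ ht y hy) (not_le.2 hy')
    have main := core hV hVm hsplit' hnm hG' hfin' hmin' hqR' conv'
      (S := {t : ℝ | ((-t : ℝ) : EReal) < omegaQ Vm Vp q}) ⟨T + 1, ?_⟩ ?_ ?_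
    · have hset : (⋂ t ∈ {t : ℝ | ((-t : ℝ) : EReal) < omegaQ Vm Vp q},
          closure ((fun t => q (-t)) '' Ici t)) = alphaLimitSet Vm Vp q := by
        have him : ∀ t : ℝ, (fun t => q (-t)) '' Ici t = q '' Iic (-t) := by
          intro t
          ext x
          constructor
          · rintro ⟨s, hs, rfl⟩
            exact ⟨-s, mem_Iic.2 (neg_le_neg (mem_Ici.1 hs)), rfl⟩
          · rintro ⟨s, hs, rfl⟩
            refine ⟨-s, ?_, by simp⟩
            have : s ≤ -t := hs
            show t ≤ -s
            linarith
        ext x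
        simp only [alphaLimitSet, mem_iInter, him]
        constructor
        · intro h t ht
          have := h (-t) (by simpa using ht)
          simpa using this
        · intro h t ht
          exact h (-t) ht
      rw [hset] at main
      refine ⟨?_, main.2⟩
      have h1 := (main.1.comp tendsto_neg_atBot_atTop).neg
      rw [neg_zero] at h1
      refine h1.congr fun t => ?_
      simp [deriv_comp_neg]
    · refine lt_of_lt_of_le ?_ hωT
      exact EReal.coe_lt_coe_iff.2 (by linarith)
    · intro t ht s hts
      exact lt_of_le_of_lt (EReal.coe_le_coe_iff.2 (by linarith)) ht
    · intro t ht
      refine ⟨fun h => ?_, fun h => ?_⟩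
      · have : omegaQ Vm Vp q ≤ ((-t : ℝ) : EReal) :=
          sInf_le ⟨-t, rfl, by rw [hα]; exact EReal.bot_lt_coe _, h⟩
        exact absurd ht (not_lt.2 this)
      · have : ((-t : ℝ) : EReal) ≤ alphaQ Vm q := le_sSup ⟨-t, rfl, h⟩
        rw [hα] at this
        exact absurd this (not_le.2 (EReal.bot_lt_coe _))
end
end
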